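/- arXiv:2102.02778 — 3 statements merged into one kernel-verified Lean document; each statement's English description precedes it below -/
import Mathlib

section
/- Let n ≥ 3 and let E_n = (ℝⁿ, ‖·‖₂) be the n-dimensional Euclidean space. If Q is any bounded linear projection from C₀¹(B_{E_n}) onto P(²E_n) (the latter viewed as a subspace of C₀¹(B_{E_n}) via restriction of polynomials to the unit ball), then ‖Q‖ ≥ C·(n − 2√2)^{1/5}, where C = (2/5)·((√2 − 1)/3 · π/72)^{1/5}. -/
open Metric Set Real

noncomputable section

/-- The closed unit ball of a normed space, as a pointed metric space. -/
def UBall (X : Type*) [NormedAddCommGroup X] : Set X := Metric.closedBall (0 : X) 1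

/-- The base point of the unit ball. -/
def zeroB (X : Type*) [NormedAddCommGroup X] : ↥(UBall X) :=
  ⟨0, Metric.mem_closedBall_self zero_le_one⟩

/-- `Lip₀(B_X)`: real-valued Lipschitz functions on the closed unit ball vanishing at `0`. -/
def Lip0B (X : Type*) [NormedAddCommGroup X] : Set (↥(UBall X) → ℝ) :=
  {f | (∃ K : NNReal, LipschitzWith K f) ∧ f (zeroB X) = 0}

/-- The image of the space `P(ᵏX)` of `k`-homogeneous polynomials on `X` inside the
functions on the unit ball, via the restriction embedding `P ↦ P↾_{B_X}`. -/
def PhomB (k : ℕ) (X : Type*) [NormedAddCommGroup X] [NormedSpace ℝ X] :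
    Set (↥(UBall X) → ℝ) :=
  {f | ∃ M : ContinuousMultilinearMap ℝ (fun _ : Fin k => X) ℝ,
    ∀ x : ↥(UBall X), f x = M (fun _ => (x : X))}

/-- `C₀¹(B_E)`: functions on the closed unit ball that are continuous on the closed ball,
continuously differentiable on the open ball with uniformly continuous derivative,
and vanish at `0`. -/
def C01B (E : Type*) [NormedAddCommGroup E] [NormedSpace ℝ E] :
    Set (↥(UBall E) → ℝ) :=
  {f | ∃ g : E → ℝ,
    (∀ x : ↥(UBall E), f x = g x) ∧
    ContinuousOn g (UBall E) ∧ g 0 = 0 ∧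
    ∃ g' : E → (E →L[ℝ] ℝ),
      (∀ x ∈ Metric.ball (0 : E) 1, HasFDerivAt g (g' x) x) ∧
      UniformContinuousOn g' (Metric.ball (0 : E) 1)}

/-!
Average the functions `⟪a, u⟫ ⟪c, u⟫ f_u(x)` over a standard Gaussian vector `u`, where
`f_u(x) = ‖x‖² ⟪u, x⟫² / (⟪u, x⟫² + ‖x‖²)` is `C¹` with Lipschitz constant at most `‖u‖ + 2` on the
ball. By rotation invariance the average is the quadratic polynomial
`α ⟪a, x⟫ ⟪c, x⟫ + β ⟪a, c⟫ ‖x‖²` with `α ≥ 1 / 6` and `β ≥ 0`, so a projection `Q` fixes it. Since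
`Q` also commutes with the average, polarizing at `a` and `c` and summing over all pairs of vectors
of an orthonormal basis yields
`n² / 12 ≤ 𝔼 B_u(u, u) ≤ K 𝔼 ‖u‖² (‖u‖ + 2) ≤ 4 K n √n`,
where `n = dim E`, `K = ‖Q‖` and `B_u` is the symmetric bilinear form with `Q f_u (x) = B_u(x, x)`.
Hence `√n ≤ 48 K`, which is much stronger than the growth of order `n^(1/5)`.

`Q` commutes with the average although it is bounded only for the Lipschitz norm, because
`u ↦ f_u` is norm continuous for this norm, and so Bochner integrable.
-/

section RealGaussian

open MeasureTheory ProbabilityTheory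
open scoped NNReal

lemma integrable_pow_gaussianReal (μ : ℝ) (v : ℝ≥0) (k : ℕ) :
    Integrable (fun t : ℝ => t ^ k) (gaussianReal μ v) := by
  refine ((memLp_id_gaussianReal' (k : ENNReal) (by simp)).integrable_norm_pow').mono
    (by fun_prop) (ae_of_all _ fun t => ?_)
  simp

lemma integrable_sq_sub_one_mul_gaussianReal (μ : ℝ) (v : ℝ≥0) {h : ℝ → ℝ} (hh : Continuous h)
    {C : ℝ} (hC : ∀ t, |h t| ≤ C) :
    Integrable (fun t => (t ^ 2 - 1) * h t) (gaussianReal μ v) :=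
  ((integrable_pow_gaussianReal μ v 2).sub (integrable_const 1)).mul_bdd
    hh.aestronglyMeasurable (ae_of_all _ hC)

lemma hasDerivAt_gaussianPDFReal_zero {v : ℝ≥0} (hv : v ≠ 0) (t : ℝ) :
    HasDerivAt (gaussianPDFReal 0 v) (-t / v * gaussianPDFReal 0 v t) t := by
  have hexponent : HasDerivAt (fun x : ℝ => -(x - 0) ^ 2 / (2 * (v : ℝ))) (-t / v) t := by
    refine ((((hasDerivAt_id t).sub_const 0).pow 2).neg.div_const _).congr_deriv ?_
    simp
    field_simp
  rw [gaussianPDFReal_def]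
  refine (hexponent.exp.const_mul _).congr_deriv ?_
  ring

lemma integral_pow_add_two_gaussianReal (v : ℝ≥0) (k : ℕ) :
    ∫ t, t ^ (k + 2) ∂gaussianReal 0 v = v * (k + 1) * ∫ t, t ^ k ∂gaussianReal 0 v := by
  rcases eq_or_ne v 0 with rfl | hv
  · simp
  have hint (m : ℕ) : Integrable fun t : ℝ => gaussianPDFReal 0 v t * t ^ m := by
    have := integrable_pow_gaussianReal 0 v m
    rw [gaussianReal_of_var_ne_zero _ hv, integrable_withDensity_iff_integrable_smul'
      (measurable_gaussianPDF _ _) (ae_of_all _ fun _ => gaussianPDF_lt_top)] at this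
    simpa [toReal_gaussianPDF] using this
  have hderiv (t : ℝ) : HasDerivAt (fun t => v * (gaussianPDFReal 0 v t * t ^ (k + 1)))
      (v * (k + 1) * (gaussianPDFReal 0 v t * t ^ k) - gaussianPDFReal 0 v t * t ^ (k + 2)) t := by
    refine (((hasDerivAt_gaussianPDFReal_zero hv t).mul
      (hasDerivAt_pow (k + 1) t)).const_mul (v : ℝ)).congr_deriv ?_
    rw [Nat.add_sub_cancel]
    push_cast
    field_simp
    ring
  have hzero := integral_eq_zero_of_hasDerivAt_of_integrable hderiv
    (((hint k).const_mul _).sub (hint (k + 2))) ((hint (k + 1)).const_mul _)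
  rw [integral_sub ((hint k).const_mul _) (hint (k + 2)), integral_const_mul] at hzero
  simp only [integral_gaussianReal_eq_integral_smul hv, smul_eq_mul]
  linarith

lemma integral_sq_gaussianReal_zero_one : ∫ t, t ^ 2 ∂gaussianReal 0 1 = 1 := by
  simp [integral_pow_add_two_gaussianReal 1 0]

lemma integral_pow_four_gaussianReal_zero_one : ∫ t, t ^ 4 ∂gaussianReal 0 1 = 3 := by
  rw [integral_pow_add_two_gaussianReal 1 2, integral_sq_gaussianReal_zero_one]
  norm_num

lemma integral_pow_six_gaussianReal_zero_one : ∫ t, t ^ 6 ∂gaussianReal 0 1 = 15 := by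
  rw [integral_pow_add_two_gaussianReal 1 4, integral_pow_four_gaussianReal_zero_one]
  norm_num

end RealGaussian

section Profile

open MeasureTheory ProbabilityTheory

/-- The bounded even profile `t ↦ t² / (t² + 1)`; on the unit sphere, `dampedSq u` is the profile of
`⟪u, ·⟫`. -/
def profile (t : ℝ) : ℝ := t ^ 2 / (t ^ 2 + 1)

lemma continuous_profile : Continuous profile :=
  (continuous_pow 2).div (by fun_prop) fun t => by positivity

lemma profile_nonneg (t : ℝ) : 0 ≤ profile t := by
  unfold profile
  positivity

lemma profile_le_one (t : ℝ) : profile t ≤ 1 := by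
  unfold profile
  exact div_le_one_of_le₀ (by linarith) (by positivity)

lemma abs_profile_le_one (t : ℝ) : |profile t| ≤ 1 :=
  (abs_of_nonneg (profile_nonneg t)).trans_le (profile_le_one t)

-- `(t² - 1) * profile t = (t² - 1) / 2 + (t² - 1)² / (2 (t² + 1))`, and `1 / (t² + 1)` lies above
-- its tangent line in the variable `t²` at `t² = 5`.
lemma polynomial_le_sq_sub_one_mul_profile (t : ℝ) :
    13 / 72 * t ^ 4 + 13 / 72 * t ^ 2 - 1 / 72 * t ^ 6 - 25 / 72
      ≤ (t ^ 2 - 1) * profile t := by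
  have hsq : 0 ≤ (t ^ 2 - 1) ^ 2 * (t ^ 2 - 5) ^ 2 := by positivity
  rw [profile, ← mul_div_assoc, le_div_iff₀ (by positivity)]
  linarith

lemma one_sixth_le_integral_sq_sub_one_mul_profile :
    1 / 6 ≤ ∫ t, (t ^ 2 - 1) * profile t ∂gaussianReal 0 1 := by
  have hpow (k : ℕ) (c : ℝ) : Integrable (fun t : ℝ => c * t ^ k) (gaussianReal 0 1) :=
    (integrable_pow_gaussianReal 0 1 k).const_mul c
  calc (1 : ℝ) / 6
      = 13 / 72 * 3 + 13 / 72 * 1 - 1 / 72 * 15 - 25 / 72 := by norm_num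
    _ = ∫ t, (13 / 72 * t ^ 4 + 13 / 72 * t ^ 2 - 1 / 72 * t ^ 6 - 25 / 72)
          ∂gaussianReal 0 1 := by
        simp (disch := fun_prop) [integral_sub, integral_add, integral_const_mul,
          integral_sq_gaussianReal_zero_one, integral_pow_four_gaussianReal_zero_one,
          integral_pow_six_gaussianReal_zero_one]
    _ ≤ ∫ t, (t ^ 2 - 1) * profile t ∂gaussianReal 0 1 :=
        integral_mono ((((hpow 4 _).add (hpow 2 _)).sub (hpow 6 _)).sub (integrable_const _))
          (integrable_sq_sub_one_mul_gaussianReal 0 1 continuous_profile abs_profile_le_one)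
          polynomial_le_sq_sub_one_mul_profile

end Profile

section BanachIntegral

open MeasureTheory

lemma exists_strongDual_comp_eq {𝕜 V W : Type*} [RCLike 𝕜] [AddCommGroup V] [Module 𝕜 V]
    [NormedAddCommGroup W] [NormedSpace 𝕜 W] (T : V →ₗ[𝕜] W) (l : V →ₗ[𝕜] 𝕜) (C : ℝ)
    (hl : ∀ v, ‖l v‖ ≤ C * ‖T v‖) : ∃ φ : StrongDual 𝕜 W, ∀ v, φ (T v) = l v := by
  obtain ⟨S, hS⟩ := T.rangeRestrict.exists_rightInverse_of_surjective T.range_rangeRestrict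
  have hTS (w : LinearMap.range T) : T (S w) = w :=
    congrArg Subtype.val (LinearMap.congr_fun hS w)
  have hbound (w : LinearMap.range T) : ‖(l ∘ₗ S) w‖ ≤ C * ‖w‖ := by
    simpa [hTS] using hl (S w)
  obtain ⟨φ, hφ, -⟩ := exists_extension_norm_eq _ ((l ∘ₗ S).mkContinuous C hbound)
  refine ⟨φ, fun v => ?_⟩
  have hker : l (S (T.rangeRestrict v)) - l v = 0 := by
    rw [← map_sub, ← norm_le_zero_iff]
    simpa [hTS] using hl (S (T.rangeRestrict v) - v)
  exact (hφ (T.rangeRestrict v)).trans (sub_eq_zero.1 hker)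

variable {V W U : Type*} [AddCommGroup V] [Module ℝ V] [NormedAddCommGroup W] [NormedSpace ℝ W]
  [MeasurableSpace U] {μ : Measure U} {T : V →ₗ[ℝ] W} {l : V →ₗ[ℝ] ℝ} {C : ℝ} {f : U → V}

lemma integrable_comp_of_abs_le_mul_norm (hl : ∀ v, |l v| ≤ C * ‖T v‖)
    (hf : Integrable (fun u => T (f u)) μ) : Integrable (fun u => l (f u)) μ := by
  obtain ⟨φ, hφ⟩ := exists_strongDual_comp_eq T l C hl
  simpa only [hφ] using φ.integrable_comp hf

lemma integral_comp_eq_of_abs_le_mul_norm [CompleteSpace W] (hl : ∀ v, |l v| ≤ C * ‖T v‖)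
    (hf : Integrable (fun u => T (f u)) μ) {v : V} (hv : T v = ∫ u, T (f u) ∂μ) :
    ∫ u, l (f u) ∂μ = l v := by
  obtain ⟨φ, hφ⟩ := exists_strongDual_comp_eq T l C hl
  simpa only [hφ, ← hv] using φ.integral_comp_comm hf

end BanachIntegral

section DeLeeuw

open MeasureTheory
open scoped NNReal

variable {M : Type*} [PseudoMetricSpace M]

variable (M) in
/-- The vector space of real-valued Lipschitz functions on `M`. -/
def lipschitzSubmodule : Submodule ℝ (M → ℝ) where
  carrier := {f | ∃ L, LipschitzWith L f}
  add_mem' := fun ⟨L, hf⟩ ⟨L', hg⟩ => ⟨L + L', hf.add hg⟩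
  zero_mem' := ⟨0, LipschitzWith.const 0⟩
  smul_mem' := fun c _ ⟨L, hf⟩ => ⟨‖c‖₊ * L, (lipschitzWith_smul c).comp hf⟩

lemma abs_sub_div_dist_le {f : M → ℝ} {L : ℝ≥0} (hf : LipschitzWith L f) (p : M × M) :
    |(f p.1 - f p.2) / dist p.1 p.2| ≤ L := by
  rw [abs_div, abs_of_nonneg (dist_nonneg (x := p.1)), ← Real.dist_eq]
  exact div_le_of_le_mul₀ dist_nonneg L.2 (hf.dist_le_mul _ _)

variable (M) in
/-- The de Leeuw map, sending a Lipschitz function to its difference quotients. It turns the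
Lipschitz constant into a sup norm, so that Bochner integrals of Lipschitz functions make sense. On
the diagonal the quotient is `0 / 0 = 0`. -/
def deLeeuw : lipschitzSubmodule M →ₗ[ℝ] lp (fun _ : M × M => ℝ) ⊤ where
  toFun f := ⟨fun p => ((f : M → ℝ) p.1 - (f : M → ℝ) p.2) / dist p.1 p.2, by
    obtain ⟨L, hf⟩ := f.2
    exact memℓp_infty_iff.2 ⟨L, by
      rintro - ⟨p, rfl⟩
      exact abs_sub_div_dist_le hf p⟩⟩
  map_add' f g := by
    ext p
    exact (congrArg (· / dist p.1 p.2) (add_sub_add_comm _ _ _ _)).trans (add_div _ _ _)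
  map_smul' c f := by
    ext p
    exact (congrArg (· / dist p.1 p.2) (mul_sub c _ _).symm).trans (mul_div_assoc c _ _)

lemma deLeeuw_apply (f : lipschitzSubmodule M) (p : M × M) :
    deLeeuw M f p = ((f : M → ℝ) p.1 - (f : M → ℝ) p.2) / dist p.1 p.2 := rfl

lemma norm_deLeeuw_le {f : lipschitzSubmodule M} {L : ℝ≥0} (hf : LipschitzWith L (f : M → ℝ)) :
    ‖deLeeuw M f‖ ≤ L :=
  lp.norm_le_of_forall_le L.2 fun p => abs_sub_div_dist_le hf p

lemma lipschitzWith_deLeeuw (f : lipschitzSubmodule M) :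
    LipschitzWith ‖deLeeuw M f‖₊ (f : M → ℝ) := by
  obtain ⟨L, hf⟩ := f.2
  refine LipschitzWith.of_dist_le_mul fun x y => ?_
  have hquot := lp.norm_apply_le_norm ENNReal.top_ne_zero (deLeeuw M f) (x, y)
  rw [deLeeuw_apply, Real.norm_eq_abs, abs_div, abs_of_nonneg (dist_nonneg (x := x)),
    ← Real.dist_eq] at hquot
  rcases (dist_nonneg (x := x) (y := y)).eq_or_lt with hxy | hxy
  · simpa [← hxy] using hf.dist_le_mul x y
  · exact (div_le_iff₀ hxy).1 hquot

lemma deLeeuw_eq_integral {U : Type*} [MeasurableSpace U] {μ : Measure U}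
    {f : U → lipschitzSubmodule M} (hf : Integrable (fun u => deLeeuw M (f u)) μ)
    (hint : ∀ x, Integrable (fun u => (f u : M → ℝ) x) μ) {F : lipschitzSubmodule M}
    (hF : ∀ x, (F : M → ℝ) x = ∫ u, (f u : M → ℝ) x ∂μ) :
    deLeeuw M F = ∫ u, deLeeuw M (f u) ∂μ := by
  ext p
  calc deLeeuw M F p
      = ∫ u, deLeeuw M (f u) p ∂μ := by
        simp only [deLeeuw_apply, hF, integral_div, integral_sub (hint p.1) (hint p.2)]
    _ = (∫ u, deLeeuw M (f u) ∂μ : lp (fun _ : M × M => ℝ) ⊤) p :=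
        (lp.evalCLM ℝ (fun _ : M × M => ℝ) ⊤ p).integral_comp_comm hf

end DeLeeuw

section PointedC1

open MeasureTheory
open scoped NNReal Topology

variable {E : Type*} [NormedAddCommGroup E] [NormedSpace ℝ E]

variable (E) in
/-- The continuously differentiable functions on the whole space vanishing at `0`. -/
def pointedC1 : Submodule ℝ (E → ℝ) where
  carrier := {g | ContDiff ℝ 1 g ∧ g 0 = 0}
  add_mem' hf hg := ⟨hf.1.add hg.1, by simp [hf.2, hg.2]⟩
  zero_mem' := ⟨contDiff_const, rfl⟩
  smul_mem' c _ hf := ⟨contDiff_const.smul hf.1, by simp [hf.2]⟩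

lemma differentiable_pointedC1 (g : pointedC1 E) : Differentiable ℝ (g : E → ℝ) :=
  g.2.1.differentiable one_ne_zero

lemma continuous_fderiv_pointedC1 (g : pointedC1 E) : Continuous (fderiv ℝ (g : E → ℝ)) :=
  g.2.1.continuous_fderiv one_ne_zero

lemma lipschitzWith_of_norm_fderiv_le {g : E → ℝ} (hg : Differentiable ℝ g) {L : ℝ≥0}
    (hL : ∀ x ∈ UBall E, ‖fderiv ℝ g x‖ ≤ L) : LipschitzWith L fun x : UBall E => g x :=
  LipschitzWith.of_dist_le_mul fun x y => by
    rw [dist_eq_norm, Subtype.dist_eq, dist_eq_norm]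
    exact (convex_closedBall (0 : E) 1).norm_image_sub_le_of_norm_fderiv_le
      (fun z _ => hg z) hL y.2 x.2

lemma isCompact_uBall (X : Type*) [NormedAddCommGroup X] [ProperSpace X] : IsCompact (UBall X) :=
  isCompact_closedBall 0 1

variable [ProperSpace E]

variable (E) in
/-- Restriction of continuously differentiable functions to the closed unit ball. -/
def ballRestrict : pointedC1 E →ₗ[ℝ] lipschitzSubmodule (UBall E) :=
  (LinearMap.funLeft ℝ ℝ Subtype.val ∘ₗ (pointedC1 E).subtype).codRestrict _ fun g => by
    obtain ⟨L, hL⟩ := (isCompact_uBall E).exists_bound_of_continuousOn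
      (continuous_fderiv_pointedC1 g).continuousOn
    exact ⟨L.toNNReal, lipschitzWith_of_norm_fderiv_le (differentiable_pointedC1 g) fun x hx =>
      (hL x hx).trans L.le_coe_toNNReal⟩

lemma ballRestrict_mem_C01B (g : pointedC1 E) :
    (ballRestrict E g : UBall E → ℝ) ∈ C01B E :=
  ⟨g, fun _ => rfl, (differentiable_pointedC1 g).continuous.continuousOn, g.2.2,
    fderiv ℝ (g : E → ℝ), fun x _ => (differentiable_pointedC1 g x).hasFDerivAt,
    ((isCompact_uBall E).uniformContinuousOn_of_continuous
      (continuous_fderiv_pointedC1 g).continuousOn).mono ball_subset_closedBall⟩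

lemma norm_deLeeuw_ballRestrict_le {g : pointedC1 E} {L : ℝ≥0}
    (hL : ∀ x ∈ UBall E, ‖fderiv ℝ (g : E → ℝ) x‖ ≤ L) :
    ‖deLeeuw (UBall E) (ballRestrict E g)‖ ≤ L :=
  norm_deLeeuw_le (lipschitzWith_of_norm_fderiv_le (differentiable_pointedC1 g) hL)

variable {U : Type*} [TopologicalSpace U] {f : U → pointedC1 E}

lemma continuous_deLeeuw_ballRestrict
    (hf : Continuous fun p : U × E => fderiv ℝ (f p.1 : E → ℝ) p.2) :
    Continuous fun u => deLeeuw (UBall E) (ballRestrict E (f u)) := by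
  have : CompactSpace (UBall E) := isCompact_iff_compactSpace.1 (isCompact_uBall E)
  let gradient : C(U × UBall E, E →L[ℝ] ℝ) :=
    ⟨fun p => fderiv ℝ (f p.1 : E → ℝ) p.2,
      hf.comp (continuous_fst.prodMk (continuous_subtype_val.comp continuous_snd))⟩
  refine continuous_iff_continuousAt.2 fun u => Metric.tendsto_nhds.2 fun ε hε => ?_
  have hgradient :=
    ContinuousMap.tendsto_iff_tendstoUniformly.1 (gradient.curry.continuous.tendsto u)
  filter_upwards [Metric.tendstoUniformly_iff.1 hgradient (ε / 2) (half_pos hε)] with v hv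
  rw [dist_eq_norm, ← map_sub, ← map_sub]
  refine (norm_deLeeuw_ballRestrict_le (L := ⟨ε / 2, (half_pos hε).le⟩) fun x hx => ?_).trans_lt
    (half_lt_self hε)
  have hfderiv : fderiv ℝ (↑(f v - f u) : E → ℝ) x
      = fderiv ℝ (f v : E → ℝ) x - fderiv ℝ (f u : E → ℝ) x :=
    fderiv_sub (differentiable_pointedC1 (f v) x) (differentiable_pointedC1 (f u) x)
  rw [hfderiv, ← dist_eq_norm, dist_comm]
  exact (hv ⟨x, hx⟩).le

lemma integrable_deLeeuw_ballRestrict [SecondCountableTopology U] [MeasurableSpace U]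
    [OpensMeasurableSpace U] {μ : Measure U} {b : U → ℝ≥0}
    (hf : Continuous fun p : U × E => fderiv ℝ (f p.1 : E → ℝ) p.2)
    (hb : Integrable (fun u => (b u : ℝ)) μ)
    (hfb : ∀ u, ∀ x ∈ UBall E, ‖fderiv ℝ (f u : E → ℝ) x‖ ≤ b u) :
    Integrable (fun u => deLeeuw (UBall E) (ballRestrict E (f u))) μ :=
  hb.mono' (continuous_deLeeuw_ballRestrict hf).aestronglyMeasurable
    (ae_of_all _ fun u => norm_deLeeuw_ballRestrict_le (hfb u))

end PointedC1

section DampedSq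

open Filter Topology

variable {E : Type*} [NormedAddCommGroup E] [InnerProductSpace ℝ E] (u x : E)

/-- The squared linear form `⟪u, ·⟫²`, damped away from the hyperplane `⟪u, ·⟫ = 0` so that its
Lipschitz constant on the unit ball grows only linearly in `u`. At `x = 0` the quotient is
`0 / 0 = 0`. -/
def dampedSq : ℝ := ‖x‖ ^ 2 * inner ℝ u x ^ 2 / (inner ℝ u x ^ 2 + ‖x‖ ^ 2)

/-- The differential of `dampedSq u` at `x`. -/
def dampedSqDeriv : E →L[ℝ] ℝ :=
  (2 * inner ℝ u x * (‖x‖ ^ 2) ^ 2 / (inner ℝ u x ^ 2 + ‖x‖ ^ 2) ^ 2) • innerSL ℝ u +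
    (2 * (inner ℝ u x ^ 2) ^ 2 / (inner ℝ u x ^ 2 + ‖x‖ ^ 2) ^ 2) • innerSL ℝ x

@[simp] lemma dampedSq_zero_right : dampedSq u 0 = 0 := by simp [dampedSq]

@[simp] lemma dampedSqDeriv_zero_right : dampedSqDeriv u 0 = 0 := by simp [dampedSqDeriv]

lemma dampedSq_eq_norm_sq_mul_profile :
    dampedSq u x = ‖x‖ ^ 2 * profile (inner ℝ u (‖x‖⁻¹ • x)) := by
  rcases eq_or_ne x 0 with rfl | hx
  · simp
  have hdenom : inner ℝ u x ^ 2 + ‖x‖ ^ 2 ≠ 0 := by positivity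
  rw [dampedSq, profile, inner_smul_right]
  field_simp

lemma dampedSq_nonneg : 0 ≤ dampedSq u x := by
  unfold dampedSq
  positivity

lemma dampedSq_le_norm_sq : dampedSq u x ≤ ‖x‖ ^ 2 := by
  rw [dampedSq_eq_norm_sq_mul_profile]
  exact mul_le_of_le_one_right (by positivity) (profile_le_one _)

lemma norm_dampedSqDeriv_le : ‖dampedSqDeriv u x‖ ≤ (‖u‖ + 2) * ‖x‖ := by
  rcases eq_or_ne x 0 with rfl | hx
  · simp
  have hr : 0 < ‖x‖ := norm_pos_iff.2 hx
  have hcoeff_left (t r : ℝ) (hr : 0 < r) : |2 * t * (r ^ 2) ^ 2 / (t ^ 2 + r ^ 2) ^ 2| ≤ r := by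
    have htr : 2 * |t| * r ≤ t ^ 2 + r ^ 2 := by simpa using two_mul_le_add_sq |t| r
    have hr_le : r ^ 2 ≤ t ^ 2 + r ^ 2 := by simp [sq_nonneg]
    rw [abs_div, abs_mul, abs_mul, abs_two, abs_of_nonneg (by positivity : 0 ≤ (r ^ 2) ^ 2),
      abs_of_nonneg (by positivity : 0 ≤ (t ^ 2 + r ^ 2) ^ 2), div_le_iff₀ (by positivity)]
    calc 2 * |t| * (r ^ 2) ^ 2 = r * (2 * |t| * r * r ^ 2) := by ring
      _ ≤ r * ((t ^ 2 + r ^ 2) * (t ^ 2 + r ^ 2)) := by gcongr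
      _ = r * (t ^ 2 + r ^ 2) ^ 2 := by ring
  have hcoeff_right (t r : ℝ) (hr : 0 < r) : |2 * (t ^ 2) ^ 2 / (t ^ 2 + r ^ 2) ^ 2| ≤ 2 := by
    rw [abs_of_nonneg (by positivity), div_le_iff₀ (by positivity)]
    gcongr
    simp [sq_nonneg]
  calc ‖dampedSqDeriv u x‖
      ≤ ‖x‖ * ‖u‖ + 2 * ‖x‖ := by
        refine norm_add_le_of_le ?_ ?_ <;>
          rw [norm_smul, innerSL_apply_norm, Real.norm_eq_abs] <;> gcongr
        · exact hcoeff_left _ _ hr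
        · exact hcoeff_right _ _ hr
    _ = (‖u‖ + 2) * ‖x‖ := by ring

lemma hasFDerivAt_dampedSq : HasFDerivAt (dampedSq u) (dampedSqDeriv u x) x := by
  rcases eq_or_ne x 0 with rfl | hx
  · rw [dampedSqDeriv_zero_right, hasFDerivAt_iff_isLittleO_nhds_zero]
    have hbigO : (fun h => dampedSq u (0 + h) - dampedSq u 0 - (0 : E →L[ℝ] ℝ) h) =O[𝓝 0]
        fun h => ‖h‖ ^ 2 :=
      Asymptotics.IsBigO.of_bound 1 <| Eventually.of_forall fun h => by
        simp [abs_of_nonneg (dampedSq_nonneg u h), dampedSq_le_norm_sq]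
    exact hbigO.trans_isLittleO (Asymptotics.isLittleO_norm_pow_id one_lt_two)
  have hdenom : inner ℝ u x ^ 2 + ‖x‖ ^ 2 ≠ 0 := by positivity
  have hinner : HasFDerivAt (fun y => inner ℝ u y ^ 2) ((2 * inner ℝ u x) • innerSL ℝ u) x := by
    simpa using (innerSL ℝ u).hasFDerivAt.pow 2
  have hnorm : HasFDerivAt (fun y : E => ‖y‖ ^ 2) (2 • innerSL ℝ x) x :=
    (hasStrictFDerivAt_norm_sq x).hasFDerivAt
  have hinv := (hasDerivAt_inv hdenom).comp_hasFDerivAt x (hinner.add hnorm)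
  refine (((hnorm.mul hinner).mul hinv).congr_fderiv ?_).congr_of_eventuallyEq
    (Eventually.of_forall fun y => div_eq_mul_inv _ _)
  ext y
  simp only [dampedSqDeriv, _root_.add_apply, _root_.smul_apply, innerSL_apply_apply, smul_eq_mul,
    nsmul_eq_mul, Pi.mul_apply, Pi.add_apply, Function.comp_apply]
  field_simp
  push_cast
  ring

lemma fderiv_dampedSq : fderiv ℝ (dampedSq u) x = dampedSqDeriv u x :=
  (hasFDerivAt_dampedSq u x).fderiv

lemma continuous_dampedSqDeriv : Continuous fun p : E × E => dampedSqDeriv p.1 p.2 := by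
  refine continuous_iff_continuousAt.2 fun ⟨u, x⟩ => ?_
  rcases eq_or_ne x 0 with rfl | hx
  · have hbound : Tendsto (fun p : E × E => (‖p.1‖ + 2) * ‖p.2‖) (𝓝 (u, 0)) (𝓝 0) := by
      have hcont : Continuous fun p : E × E => (‖p.1‖ + 2) * ‖p.2‖ := by fun_prop
      simpa using hcont.tendsto (u, 0)
    rw [ContinuousAt, dampedSqDeriv_zero_right]
    exact squeeze_zero_norm (fun p => norm_dampedSqDeriv_le p.1 p.2) hbound
  · have hdenom : (inner ℝ u x ^ 2 + ‖x‖ ^ 2) ^ 2 ≠ 0 := by positivity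
    unfold dampedSqDeriv
    fun_prop (disch := exact hdenom)

lemma contDiff_dampedSq : ContDiff ℝ 1 (dampedSq u) :=
  contDiff_one_iff_hasFDerivAt.2 ⟨dampedSqDeriv u,
    continuous_dampedSqDeriv.comp (continuous_const.prodMk continuous_id), hasFDerivAt_dampedSq u⟩

end DampedSq

section StdGaussian

open MeasureTheory ProbabilityTheory

variable {E : Type*} [NormedAddCommGroup E] [InnerProductSpace ℝ E] [FiniteDimensional ℝ E]
  [MeasurableSpace E] [BorelSpace E]

lemma map_inner_stdGaussian {e : E} (he : ‖e‖ = 1) :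
    (stdGaussian E).map (fun u => inner ℝ e u) = gaussianReal 0 1 := by
  have hlaw := IsGaussian.map_eq_gaussianReal (μ := stdGaussian E) (innerSL ℝ e)
  rw [integral_strongDual_stdGaussian, variance_dual_stdGaussian, innerSL_apply_norm, he] at hlaw
  simpa using hlaw

lemma integral_comp_inner_stdGaussian {e : E} (he : ‖e‖ = 1) {h : ℝ → ℝ} (hh : Continuous h) :
    ∫ u, h (inner ℝ e u) ∂stdGaussian E = ∫ t, h t ∂gaussianReal 0 1 := by
  rw [← map_inner_stdGaussian he, integral_map (by fun_prop) hh.aestronglyMeasurable]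

lemma memLp_inner_stdGaussian (a : E) (p : ENNReal) (hp : p ≠ ⊤) :
    MemLp (fun u => inner ℝ a u) p (stdGaussian E) :=
  (IsGaussian.memLp_id (stdGaussian E) p hp).const_inner a

lemma integrable_norm_pow_stdGaussian (k : ℕ) :
    Integrable (fun u : E => ‖u‖ ^ k) (stdGaussian E) :=
  (IsGaussian.memLp_id (stdGaussian E) k (by simp)).integrable_norm_pow'

lemma integrable_norm_sq_mul_norm_add_two_stdGaussian :
    Integrable (fun u : E => ‖u‖ ^ 2 * (‖u‖ + 2)) (stdGaussian E) :=
  ((integrable_norm_pow_stdGaussian 3).add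
    ((integrable_norm_pow_stdGaussian 2).const_mul 2)).congr (ae_of_all _ fun u => by
      simp only [Pi.add_apply]
      ring)

lemma integral_inner_mul_inner_stdGaussian (a c : E) :
    ∫ u, inner ℝ a u * inner ℝ c u ∂stdGaussian E = inner ℝ a c := by
  have hcov := covarianceBilin_apply (IsGaussian.memLp_id (stdGaussian E) 2 (by simp)) a c
  rw [covarianceBilin_stdGaussian] at hcov
  simpa [innerSL_apply_apply ℝ] using hcov.symm

lemma indepFun_stdGaussian {F G : Type*} [NormedAddCommGroup F] [InnerProductSpace ℝ F]
    [CompleteSpace F] [MeasurableSpace F] [BorelSpace F] [SecondCountableTopology F]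
    [NormedAddCommGroup G] [InnerProductSpace ℝ G]
    [CompleteSpace G] [MeasurableSpace G] [BorelSpace G] [SecondCountableTopology G]
    (S : E →L[ℝ] F) (T : E →L[ℝ] G) (hST : S ∘L T.adjoint = 0) :
    IndepFun S T (stdGaussian E) := by
  have hlaw : HasGaussianLaw (fun u => (S u, T u)) (stdGaussian E) :=
    IsGaussian.hasGaussianLaw_id.map_fun (S.prod T)
  refine hlaw.indepFun_of_covariance_inner fun x y => ?_
  simp only [← ContinuousLinearMap.adjoint_inner_left]
  rw [← covarianceBilin_apply_eq_cov (IsGaussian.memLp_id (stdGaussian E) 2 (by simp)),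
    covarianceBilin_stdGaussian, innerSL_apply_apply, ContinuousLinearMap.adjoint_inner_left,
    ← ContinuousLinearMap.comp_apply, hST]
  simp

lemma integral_norm_sq_stdGaussian :
    ∫ u, ‖u‖ ^ 2 ∂stdGaussian E = Module.finrank ℝ E := by
  have hint (u : E) : ‖u‖ ^ 2 = ∑ i, inner ℝ (stdOrthonormalBasis ℝ E i) u ^ 2 :=
    ((stdOrthonormalBasis ℝ E).sum_sq_inner_right u).symm
  simp_rw [hint]
  rw [integral_finsetSum _ fun i _ => (memLp_inner_stdGaussian _ 2 (by simp)).integrable_sq]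
  simp [sq, integral_inner_mul_inner_stdGaussian]

lemma integral_norm_pow_four_stdGaussian_le :
    ∫ u, ‖u‖ ^ 4 ∂stdGaussian E ≤ 3 * (Module.finrank ℝ E : ℝ) ^ 2 := by
  set b := stdOrthonormalBasis ℝ E
  have hcauchy (u : E) : ‖u‖ ^ 4 ≤ Module.finrank ℝ E * ∑ i, inner ℝ (b i) u ^ 4 := by
    have := sq_sum_le_card_mul_sum_sq (s := Finset.univ) (f := fun i => inner ℝ (b i) u ^ 2)
    simpa [b.sum_sq_inner_right, ← pow_mul] using this
  have hint (i) : Integrable (fun u => inner ℝ (b i) u ^ 4) (stdGaussian E) := by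
    simpa [Even.pow_abs (by decide : Even 4)] using
      (memLp_inner_stdGaussian (b i) (4 : ℕ) (by simp)).integrable_norm_pow'
  calc ∫ u, ‖u‖ ^ 4 ∂stdGaussian E
      ≤ ∫ u, Module.finrank ℝ E * ∑ i, inner ℝ (b i) u ^ 4 ∂stdGaussian E :=
        integral_mono (integrable_norm_pow_stdGaussian 4)
          ((integrable_finsetSum _ fun i _ => hint i).const_mul _) hcauchy
    _ = Module.finrank ℝ E * ∑ i : Fin (Module.finrank ℝ E), ∫ t, t ^ 4 ∂gaussianReal 0 1 := by
        rw [integral_const_mul, integral_finsetSum _ fun i _ => hint i]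
        simp_rw [fun i => integral_comp_inner_stdGaussian (b.norm_eq_one i) (continuous_pow 4)]
    _ = 3 * (Module.finrank ℝ E : ℝ) ^ 2 := by
        simp [integral_pow_four_gaussianReal_zero_one]
        ring

lemma integral_norm_sq_mul_norm_add_two_stdGaussian_le [Nontrivial E] :
    ∫ u, ‖u‖ ^ 2 * (‖u‖ + 2) ∂stdGaussian E
      ≤ 4 * (Module.finrank ℝ E : ℝ) * √(Module.finrank ℝ E : ℝ) := by
  set d := (Module.finrank ℝ E : ℝ)
  have hd : 1 ≤ d := Nat.one_le_cast.2 Module.finrank_pos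
  have hs : 1 ≤ √d := Real.one_le_sqrt.2 hd
  have hsq : √d ^ 2 = d := Real.sq_sqrt (by linarith)
  -- AM-GM: `‖u‖³ ≤ (√d ‖u‖² + ‖u‖⁴ / √d) / 2`
  have hpoint (u : E) :
      ‖u‖ ^ 2 * (‖u‖ + 2) ≤ (√d / 2 + 2) * ‖u‖ ^ 2 + 1 / (2 * √d) * ‖u‖ ^ 4 := by
    have hsquare : 0 ≤ 1 / (2 * √d) * (‖u‖ ^ 2 * (‖u‖ - √d) ^ 2) := by positivity
    have hexpand : 1 / (2 * √d) * (‖u‖ ^ 2 * (‖u‖ - √d) ^ 2) = (√d / 2 + 2) * ‖u‖ ^ 2 +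
        1 / (2 * √d) * ‖u‖ ^ 4 - ‖u‖ ^ 2 * (‖u‖ + 2) := by
      field_simp
      ring
    linarith
  have hpow (k : ℕ) (c : ℝ) : Integrable (fun u : E => c * ‖u‖ ^ k) (stdGaussian E) :=
    (integrable_norm_pow_stdGaussian k).const_mul c
  calc ∫ u, ‖u‖ ^ 2 * (‖u‖ + 2) ∂stdGaussian E
      ≤ ∫ u, ((√d / 2 + 2) * ‖u‖ ^ 2 + 1 / (2 * √d) * ‖u‖ ^ 4) ∂stdGaussian E :=
        integral_mono_of_nonneg (ae_of_all _ fun u => by positivity)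
          ((hpow 2 _).add (hpow 4 _)) (ae_of_all _ hpoint)
    _ = (√d / 2 + 2) * d + 1 / (2 * √d) * ∫ u, ‖u‖ ^ 4 ∂stdGaussian E := by
        rw [integral_add (hpow 2 _) (hpow 4 _), integral_const_mul, integral_const_mul,
          integral_norm_sq_stdGaussian]
    _ ≤ (√d / 2 + 2) * d + 1 / (2 * √d) * (3 * (√d ^ 2) ^ 2) := by
        rw [hsq]
        gcongr
        exact integral_norm_pow_four_stdGaussian_le
    _ = 2 * d * √d + 2 * d := by
        field_simp
        linear_combination 3 * √d * hsq
    _ ≤ 4 * d * √d := by nlinarith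

lemma indepFun_inner_sub_smul_stdGaussian {e : E} (he : ‖e‖ = 1) :
    IndepFun (fun u => inner ℝ e u) (fun u => u - inner ℝ e u • e) (stdGaussian E) :=
  (indepFun_stdGaussian (ContinuousLinearMap.id ℝ E - (innerSL ℝ e).smulRight e) (innerSL ℝ e) <| by
    ext
    simp [ContinuousLinearMap.adjoint_innerSL_apply, he]).symm

variable {e a c : E} {h : ℝ → ℝ}

lemma integral_inner_mul_inner_mul_comp_of_orthogonal (he : ‖e‖ = 1) (ha : inner ℝ a e = 0)
    (hc : inner ℝ c e = 0) (hh : Continuous h) :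
    ∫ u, inner ℝ a u * inner ℝ c u * h (inner ℝ e u) ∂stdGaussian E =
      inner ℝ a c * ∫ t, h t ∂gaussianReal 0 1 := by
  have hindep := (indepFun_inner_sub_smul_stdGaussian he).symm.integral_fun_comp_mul_comp
    (f := fun w => inner ℝ a w * inner ℝ c w) (g := h)
    (by fun_prop) (by fun_prop) (by fun_prop) (by fun_prop)
  simpa [inner_sub_right, inner_smul_right, ha, hc, integral_inner_mul_inner_stdGaussian,
    integral_comp_inner_stdGaussian he hh] using hindep

lemma integral_inner_mul_comp_eq_zero_of_orthogonal (he : ‖e‖ = 1) (ha : inner ℝ a e = 0)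
    (hh : Continuous h) :
    ∫ u, inner ℝ a u * h (inner ℝ e u) ∂stdGaussian E = 0 := by
  have hindep := (indepFun_inner_sub_smul_stdGaussian he).symm.integral_fun_comp_mul_comp
    (f := fun w => inner ℝ a w) (g := h) (by fun_prop) (by fun_prop) (by fun_prop) (by fun_prop)
  have hmean : ∫ u, inner ℝ a u ∂stdGaussian E = 0 :=
    integral_strongDual_stdGaussian (innerSL ℝ a)
  simpa [inner_sub_right, inner_smul_right, ha, hmean] using hindep

lemma integral_inner_mul_self_mul_comp_stdGaussian (he : ‖e‖ = 1) (hh : Continuous h) {C : ℝ}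
    (hC : ∀ t, |h t| ≤ C) :
    ∫ u, inner ℝ e u * inner ℝ e u * h (inner ℝ e u) ∂stdGaussian E =
      (∫ t, (t ^ 2 - 1) * h t ∂gaussianReal 0 1) + ∫ t, h t ∂gaussianReal 0 1 := by
  rw [integral_comp_inner_stdGaussian he (h := fun t => t * t * h t) (by fun_prop),
    ← integral_add (integrable_sq_sub_one_mul_gaussianReal 0 1 hh hC)
      (.of_bound hh.aestronglyMeasurable C (ae_of_all _ hC))]
  exact integral_congr_ae (ae_of_all _ fun t => by ring)

lemma integral_inner_mul_inner_mul_comp_stdGaussian (he : ‖e‖ = 1) (a c : E)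
    (hh : Continuous h) {C : ℝ} (hC : ∀ t, |h t| ≤ C) :
    ∫ u, inner ℝ a u * inner ℝ c u * h (inner ℝ e u) ∂stdGaussian E =
      (∫ t, (t ^ 2 - 1) * h t ∂gaussianReal 0 1) * (inner ℝ a e * inner ℝ c e) +
        (∫ t, h t ∂gaussianReal 0 1) * inner ℝ a c := by
  obtain ⟨s, a, ha, rfl⟩ : ∃ s : ℝ, ∃ a', inner ℝ a' e = 0 ∧ a = s • e + a' :=
    ⟨inner ℝ a e, a - inner ℝ a e • e, by simp [inner_sub_left, inner_smul_left, he], by simp⟩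
  obtain ⟨r, c, hc, rfl⟩ : ∃ r : ℝ, ∃ c', inner ℝ c' e = 0 ∧ c = r • e + c' :=
    ⟨inner ℝ c e, c - inner ℝ c e • e, by simp [inner_sub_left, inner_smul_left, he], by simp⟩
  have hint (v w : E) : Integrable (fun u => inner ℝ v u * inner ℝ w u * h (inner ℝ e u))
      (stdGaussian E) :=
    ((memLp_inner_stdGaussian v 2 (by simp)).integrable_mul
      (memLp_inner_stdGaussian w 2 (by simp))).mul_bdd (by fun_prop) (ae_of_all _ fun u => hC _)
  have hcross {v : E} (hv : inner ℝ v e = 0) :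
      ∫ u, inner ℝ v u * inner ℝ e u * h (inner ℝ e u) ∂stdGaussian E = 0 := by
    simpa only [mul_assoc] using integral_inner_mul_comp_eq_zero_of_orthogonal he hv
      (h := fun t => t * h t) (by fun_prop)
  calc ∫ u, inner ℝ (s • e + a) u * inner ℝ (r • e + c) u * h (inner ℝ e u) ∂stdGaussian E
      = ∫ u, (s * r * (inner ℝ e u * inner ℝ e u * h (inner ℝ e u)) +
          r * (inner ℝ a u * inner ℝ e u * h (inner ℝ e u)) +
          s * (inner ℝ c u * inner ℝ e u * h (inner ℝ e u)) +
          inner ℝ a u * inner ℝ c u * h (inner ℝ e u)) ∂stdGaussian E := by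
        simp only [inner_add_left, real_inner_smul_left]
        exact integral_congr_ae (ae_of_all _ fun u => by ring)
    _ = s * r * ((∫ t, (t ^ 2 - 1) * h t ∂gaussianReal 0 1) + ∫ t, h t ∂gaussianReal 0 1) +
          inner ℝ a c * ∫ t, h t ∂gaussianReal 0 1 := by
        simp (disch := fun_prop) only [integral_add, integral_const_mul, hcross ha, hcross hc,
          integral_inner_mul_self_mul_comp_stdGaussian he hh hC,
          integral_inner_mul_inner_mul_comp_of_orthogonal he ha hc hh]
        ring
    _ = _ := by
        simp [inner_add_left, inner_add_right, inner_smul_left, inner_smul_right,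
          real_inner_comm c e, ha, hc, he]
        ring

end StdGaussian

section Polarization

open scoped NNReal

variable {E : Type*} [NormedAddCommGroup E] [NormedSpace ℝ E]

lemma exists_bilinForm_of_mem_PhomB {f : UBall E → ℝ} (hf : f ∈ PhomB 2 E) :
    ∃ B : LinearMap.BilinForm ℝ E, ∀ x : UBall E, f x = B x x := by
  obtain ⟨M, hM⟩ := hf
  refine ⟨LinearMap.mk₂ ℝ (fun x y => (continuousMultilinearCurryFin1 ℝ E ℝ) (M.curryLeft x) y)
    (fun _ _ _ => by simp only [map_add, _root_.add_apply])
    (fun _ _ _ => by simp only [map_smul, _root_.smul_apply])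
    (fun _ _ _ => map_add _ _ _) (fun _ _ _ => map_smul _ _ _), fun x => ?_⟩
  rw [hM, LinearMap.mk₂_apply, continuousMultilinearCurryFin1_apply,
    ContinuousMultilinearMap.curryLeft_apply]
  congr 1
  ext i
  fin_cases i <;> rfl

lemma diagonal_mem_PhomB (B : E →L[ℝ] E →L[ℝ] ℝ) :
    (fun x : UBall E => B x x) ∈ PhomB 2 E :=
  ⟨B.uncurryBilinear.compContinuousLinearMap
    fun _ => (ContinuousLinearMap.id ℝ E).prod (ContinuousLinearMap.id ℝ E), fun _ => rfl⟩

/-- The midpoint of two points of the closed unit ball. -/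
def ballMidpoint (a c : UBall E) : UBall E :=
  ⟨midpoint ℝ (a : E) c, (convex_closedBall 0 1).midpoint_mem a.2 c.2⟩

/-- The reflection of a point of the closed unit ball in its centre. -/
def ballNeg (a : UBall E) : UBall E :=
  ⟨-a, by simpa [UBall] using a.2⟩

/-- The functional `f ↦ f ((a + c) / 2) - f ((a - c) / 2)`, which recovers a symmetric bilinear
form from its quadratic form. The halves keep both points in the ball. -/
def polarization (a c : UBall E) : (UBall E → ℝ) →ₗ[ℝ] ℝ :=
  LinearMap.proj (R := ℝ) (φ := fun _ => ℝ) (ballMidpoint a c) -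
    LinearMap.proj (R := ℝ) (φ := fun _ => ℝ) (ballMidpoint a (ballNeg c))

lemma polarization_apply (a c : UBall E) (f : UBall E → ℝ) :
    polarization a c f = f (ballMidpoint a c) - f (ballMidpoint a (ballNeg c)) := rfl

lemma abs_polarization_le {f : UBall E → ℝ} {L : ℝ≥0} (hf : LipschitzWith L f)
    (a c : UBall E) : |polarization a c f| ≤ L := by
  have hdist : dist (ballMidpoint a c) (ballMidpoint a (ballNeg c)) ≤ 1 := by
    have hsub : midpoint ℝ (a : E) c - midpoint ℝ (a : E) (-c) = c := by
      rw [midpoint_eq_smul_add, midpoint_eq_smul_add, invOf_eq_inv]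
      module
    rw [Subtype.dist_eq, dist_eq_norm, ballMidpoint, ballMidpoint, ballNeg, hsub]
    exact mem_closedBall_zero_iff.1 c.2
  rw [polarization_apply, ← Real.dist_eq]
  exact (hf.dist_le_mul _ _).trans (mul_le_of_le_one_right L.2 hdist)

lemma polarization_diagonal (B : LinearMap.BilinForm ℝ E) (a c : UBall E) :
    polarization a c (fun x => B x x) = (B a c + B c a) / 2 := by
  simp only [polarization_apply, ballMidpoint, ballNeg, midpoint_eq_smul_add, invOf_eq_inv,
    map_add, map_smul, map_neg, LinearMap.add_apply, LinearMap.smul_apply, LinearMap.neg_apply,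
    smul_eq_mul]
  ring

lemma abs_diagonal_le_of_lipschitzWith {B : LinearMap.BilinForm ℝ E} {L : ℝ≥0}
    (hB : LipschitzWith L fun x : UBall E => B x x) (u : E) : |B u u| ≤ L * ‖u‖ ^ 2 := by
  rcases eq_or_ne u 0 with rfl | hu
  · simp
  have hnorm : ‖‖u‖⁻¹ • u‖ = 1 := norm_smul_inv_norm (𝕜 := ℝ) hu
  have hsphere : |B (‖u‖⁻¹ • u) (‖u‖⁻¹ • u)| ≤ L := by
    simpa [Real.dist_eq, Subtype.dist_eq, zeroB, hnorm] using
      hB.dist_le_mul ⟨‖u‖⁻¹ • u, mem_closedBall_zero_iff.2 hnorm.le⟩ (zeroB E)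
  have hscale : B u u = B (‖u‖⁻¹ • u) (‖u‖⁻¹ • u) * ‖u‖ ^ 2 := by
    simp only [map_smul, LinearMap.smul_apply, smul_eq_mul]
    field_simp [norm_ne_zero_iff.2 hu]
  rw [hscale, abs_mul, abs_of_nonneg (sq_nonneg ‖u‖)]
  gcongr

end Polarization

section OrthonormalPolarization

open scoped NNReal

variable {E : Type*} [NormedAddCommGroup E] [InnerProductSpace ℝ E] {ι : Type*} [Fintype ι]

/-- The vectors of an orthonormal basis as points of the closed unit ball. -/
def basisPoint (b : OrthonormalBasis ι ℝ E) (i : ι) : UBall E :=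
  ⟨b i, by simp [UBall]⟩

lemma sum_inner_mul_inner_mul_polarization (b : OrthonormalBasis ι ℝ E)
    (B : LinearMap.BilinForm ℝ E) (u : E) :
    ∑ i, ∑ j, inner ℝ (b i) u * inner ℝ (b j) u *
      polarization (basisPoint b i) (basisPoint b j) (fun x => B x x) = B u u := by
  have hexpand : B u u = ∑ i, ∑ j, inner ℝ (b i) u * inner ℝ (b j) u * B (b j) (b i) := by
    conv_lhs => rw [← b.sum_repr' u]
    simp only [LinearMap.BilinForm.sum_left, LinearMap.BilinForm.sum_right,
      LinearMap.BilinForm.smul_left, LinearMap.BilinForm.smul_right, Finset.mul_sum, mul_assoc]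
  have hswap : B u u = ∑ i, ∑ j, inner ℝ (b i) u * inner ℝ (b j) u * B (b i) (b j) := by
    rw [hexpand, Finset.sum_comm]
    exact Finset.sum_congr rfl fun i _ => Finset.sum_congr rfl fun j _ => by ring
  calc _ = (∑ i, ∑ j, inner ℝ (b i) u * inner ℝ (b j) u * B (b i) (b j) +
        ∑ i, ∑ j, inner ℝ (b i) u * inner ℝ (b j) u * B (b j) (b i)) / 2 := by
        simp only [polarization_diagonal, basisPoint, ← Finset.sum_add_distrib, Finset.sum_div]
        exact Finset.sum_congr rfl fun i _ => Finset.sum_congr rfl fun j _ => by ring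
    _ = B u u := by rw [← hswap, ← hexpand, add_self_div_two]

lemma sum_inner_mul_inner_mul_polarization_le (b : OrthonormalBasis ι ℝ E) {f : UBall E → ℝ}
    (hf : f ∈ PhomB 2 E) {L : ℝ≥0} (hfL : LipschitzWith L f) (u : E) :
    ∑ i, ∑ j, inner ℝ (b i) u * inner ℝ (b j) u *
      polarization (basisPoint b i) (basisPoint b j) f ≤ L * ‖u‖ ^ 2 := by
  obtain ⟨B, hB⟩ := exists_bilinForm_of_mem_PhomB hf
  obtain rfl : f = fun x : UBall E => B x x := funext hB
  rw [sum_inner_mul_inner_mul_polarization]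
  exact (le_abs_self _).trans (abs_diagonal_le_of_lipschitzWith hfL u)

end OrthonormalPolarization

section GaussianAverage

open MeasureTheory ProbabilityTheory
open scoped NNReal

variable {E : Type*} [NormedAddCommGroup E] [InnerProductSpace ℝ E]

/-- The bilinear form whose quadratic form is the average of `⟪a, u⟫ ⟪c, u⟫ dampedSq u` over a
standard Gaussian `u`. -/
def averagedForm (a c : E) : E →L[ℝ] E →L[ℝ] ℝ :=
  (∫ t, (t ^ 2 - 1) * profile t ∂gaussianReal 0 1) • (innerSL ℝ a).smulRight (innerSL ℝ c) +
    ((∫ t, profile t ∂gaussianReal 0 1) * inner ℝ a c) •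
      isBoundedBilinearMap_inner.toContinuousLinearMap

lemma averagedForm_apply (a c x y : E) :
    averagedForm a c x y =
      (∫ t, (t ^ 2 - 1) * profile t ∂gaussianReal 0 1) * (inner ℝ a x * inner ℝ c y) +
        (∫ t, profile t ∂gaussianReal 0 1) * inner ℝ a c * inner ℝ x y := rfl

/-- A quadratic form as a pointed continuously differentiable function. -/
def diagonalC1 (B : E →L[ℝ] E →L[ℝ] ℝ) : pointedC1 E :=
  ⟨fun x => B x x, by fun_prop, by simp⟩

/-- The function `dampedSq u` as an element of `pointedC1`. -/
def dampedSqC1 (u : E) : pointedC1 E :=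
  ⟨dampedSq u, contDiff_dampedSq u, dampedSq_zero_right u⟩

lemma one_twelfth_le_polarization_averagedForm {a c : UBall E} (ha : ‖(a : E)‖ = 1)
    (hc : ‖(c : E)‖ = 1) :
    1 / 12 ≤ polarization a c (fun x => averagedForm (a : E) c x x) := by
  have hvariance := one_sixth_le_integral_sq_sub_one_mul_profile
  have hmean : 0 ≤ ∫ t, profile t ∂gaussianReal 0 1 := integral_nonneg profile_nonneg
  have hpolar : polarization a c (fun x => averagedForm (a : E) c x x) =
      (averagedForm (a : E) c a c + averagedForm (a : E) c c a) / 2 :=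
    polarization_diagonal (averagedForm (a : E) c).toLinearMap₁₂ a c
  rw [hpolar, averagedForm_apply, averagedForm_apply, real_inner_self_eq_norm_sq,
    real_inner_self_eq_norm_sq, ha, hc, real_inner_comm (a : E) c]
  have hinner := mul_self_nonneg (inner ℝ (a : E) c)
  have hmean_inner := mul_nonneg hmean hinner
  have hvariance_inner := mul_nonneg (hvariance.trans' (by norm_num)) hinner
  linarith

variable [FiniteDimensional ℝ E] [MeasurableSpace E] [BorelSpace E]

lemma integral_inner_mul_inner_mul_dampedSq (a c x : E) :
    ∫ u, inner ℝ a u * inner ℝ c u * dampedSq u x ∂stdGaussian E = averagedForm a c x x := by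
  rcases eq_or_ne x 0 with rfl | hx
  · simp
  have hnorm : ‖‖x‖⁻¹ • x‖ = 1 := norm_smul_inv_norm (𝕜 := ℝ) hx
  have haverage := integral_inner_mul_inner_mul_comp_stdGaussian hnorm a c continuous_profile
    abs_profile_le_one
  calc ∫ u, inner ℝ a u * inner ℝ c u * dampedSq u x ∂stdGaussian E
      = ‖x‖ ^ 2 * ∫ u, inner ℝ a u * inner ℝ c u * profile (inner ℝ (‖x‖⁻¹ • x) u)
          ∂stdGaussian E := by
        rw [← integral_const_mul]
        refine integral_congr_ae (ae_of_all _ fun u => ?_)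
        simp only [dampedSq_eq_norm_sq_mul_profile, real_inner_comm u]
        ring
    _ = averagedForm a c x x := by
        rw [haverage, averagedForm_apply, real_inner_self_eq_norm_sq, real_inner_smul_right,
          real_inner_smul_right]
        field_simp [norm_ne_zero_iff.2 hx]

/-- The integrand of the Gaussian average whose value is the quadratic form of
`averagedForm a c`. -/
def weightedDampedSq (a c u : E) : pointedC1 E :=
  (inner ℝ a u * inner ℝ c u) • dampedSqC1 u

lemma integrable_deLeeuw_weightedDampedSq (a c : E) :
    Integrable (fun u => deLeeuw (UBall E) (ballRestrict E (weightedDampedSq a c u)))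
      (stdGaussian E) := by
  have hfderiv (u x : E) : fderiv ℝ (weightedDampedSq a c u : E → ℝ) x =
      (inner ℝ a u * inner ℝ c u) • dampedSqDeriv u x :=
    ((hasFDerivAt_dampedSq u x).const_smul _).fderiv
  refine integrable_deLeeuw_ballRestrict
    (b := fun u => ‖a‖₊ * ‖c‖₊ * (‖u‖₊ ^ 2 * (‖u‖₊ + 2))) ?_ ?_ fun u x hx => ?_
  · simp only [hfderiv]
    have hweight : Continuous fun p : E × E => inner ℝ a p.1 * inner ℝ c p.1 := by fun_prop
    exact hweight.smul continuous_dampedSqDeriv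
  · exact integrable_norm_sq_mul_norm_add_two_stdGaussian.const_mul (‖a‖ * ‖c‖)
  · calc ‖fderiv ℝ (weightedDampedSq a c u : E → ℝ) x‖
        = |inner ℝ a u| * |inner ℝ c u| * ‖dampedSqDeriv u x‖ := by
          rw [hfderiv, norm_smul, Real.norm_eq_abs, abs_mul]
      _ ≤ (‖a‖ * ‖u‖) * (‖c‖ * ‖u‖) * ((‖u‖ + 2) * 1) := by
          gcongr
          · exact abs_real_inner_le_norm a u
          · exact abs_real_inner_le_norm c u
          · exact (norm_dampedSqDeriv_le u x).trans (by gcongr; exact mem_closedBall_zero_iff.1 hx)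
      _ = _ := by
          push_cast
          ring

lemma deLeeuw_averagedForm_eq_integral (a c : E) :
    deLeeuw (UBall E) (ballRestrict E (diagonalC1 (averagedForm a c))) =
      ∫ u, deLeeuw (UBall E) (ballRestrict E (weightedDampedSq a c u)) ∂stdGaussian E := by
  refine deLeeuw_eq_integral (integrable_deLeeuw_weightedDampedSq a c) (fun x => ?_)
    fun x => (integral_inner_mul_inner_mul_dampedSq a c (x : E)).symm
  have hcont : Continuous fun u : E => dampedSq u x := by
    simp only [dampedSq_eq_norm_sq_mul_profile]
    exact continuous_const.mul (continuous_profile.comp (by fun_prop))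
  exact ((memLp_inner_stdGaussian a 2 (by simp)).integrable_mul
    (memLp_inner_stdGaussian c 2 (by simp))).mul_bdd hcont.aestronglyMeasurable
    (ae_of_all _ fun u => (abs_of_nonneg (dampedSq_nonneg u x)).trans_le (dampedSq_le_norm_sq u x))

end GaussianAverage

section QuadraticProjection

open MeasureTheory ProbabilityTheory
open scoped NNReal

variable {E : Type*} [NormedAddCommGroup E]

/-- `Q` restricts to a linear projection of `C₀¹(B_E)` onto `P(²E)` with norm at most `K`. -/
structure IsQuadraticProjection [NormedSpace ℝ E] (Q : (UBall E → ℝ) →ₗ[ℝ] UBall E → ℝ)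
    (K : ℝ≥0) : Prop where
  mem_PhomB : ∀ f ∈ C01B E, Q f ∈ PhomB 2 E
  apply_eq_self : ∀ f ∈ PhomB 2 E, Q f = f
  lipschitzWith : ∀ f ∈ C01B E, ∀ L : ℝ≥0, LipschitzWith L f → LipschitzWith (K * L) (Q f)

variable [InnerProductSpace ℝ E] [FiniteDimensional ℝ E] {Q : (UBall E → ℝ) →ₗ[ℝ] UBall E → ℝ}
  {K : ℝ≥0}

/-- The coefficient functional `g ↦ polarization a c (Q g)` on `pointedC1`. -/
def projectionCoeff (Q : (UBall E → ℝ) →ₗ[ℝ] UBall E → ℝ) (a c : UBall E) : pointedC1 E →ₗ[ℝ] ℝ :=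
  polarization a c ∘ₗ Q ∘ₗ (lipschitzSubmodule (UBall E)).subtype ∘ₗ ballRestrict E

lemma abs_projectionCoeff_le (hQ : IsQuadraticProjection Q K) (a c : UBall E) (g : pointedC1 E) :
    |projectionCoeff Q a c g| ≤ K * ‖deLeeuw (UBall E) (ballRestrict E g)‖ :=
  abs_polarization_le (hQ.lipschitzWith _ (ballRestrict_mem_C01B g) _ (lipschitzWith_deLeeuw _)) a c

lemma projectionCoeff_diagonalC1 (hQ : IsQuadraticProjection Q K) (a c : UBall E)
    (B : E →L[ℝ] E →L[ℝ] ℝ) :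
    projectionCoeff Q a c (diagonalC1 B) = polarization a c (fun x => B x x) :=
  congrArg (polarization a c) (hQ.apply_eq_self _ (diagonal_mem_PhomB B))

lemma one_le_of_isQuadraticProjection [Nontrivial E] (hQ : IsQuadraticProjection Q K) :
    1 ≤ K := by
  obtain ⟨e, he⟩ := exists_norm_eq E zero_le_one
  let p : UBall E := ⟨e, mem_closedBall_zero_iff.2 he.le⟩
  let f := ballRestrict E (diagonalC1 (averagedForm e e))
  have hf : LipschitzWith (K * ‖deLeeuw (UBall E) f‖₊) (f : UBall E → ℝ) := by
    have hQf : Q f = f := hQ.apply_eq_self _ (diagonal_mem_PhomB (averagedForm e e))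
    rw [← hQf]
    exact hQ.lipschitzWith _ (ballRestrict_mem_C01B _) _ (lipschitzWith_deLeeuw f)
  have hpos : 0 < ‖deLeeuw (UBall E) f‖ := by
    have hpolar := one_twelfth_le_polarization_averagedForm (a := p) (c := p) he he
    have hbound := (le_abs_self _).trans (abs_polarization_le (lipschitzWith_deLeeuw f) p p)
    exact (by norm_num : (0 : ℝ) < 1 / 12).trans_le (hpolar.trans hbound)
  exact_mod_cast (le_mul_iff_one_le_left hpos).1 (norm_deLeeuw_le hf)

lemma sum_projectionCoeff_le {ι : Type*} [Fintype ι] (b : OrthonormalBasis ι ℝ E)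
    (hQ : IsQuadraticProjection Q K) (u : E) :
    ∑ i, ∑ j, projectionCoeff Q (basisPoint b i) (basisPoint b j)
      (weightedDampedSq (b i) (b j) u) ≤ K * (‖u‖ ^ 2 * (‖u‖ + 2)) := by
  have hmem := ballRestrict_mem_C01B (dampedSqC1 u)
  have hLip : LipschitzWith (‖u‖₊ + 2) (ballRestrict E (dampedSqC1 u) : UBall E → ℝ) :=
    lipschitzWith_of_norm_fderiv_le (differentiable_pointedC1 (dampedSqC1 u)) fun x hx => by
      have hx' : ‖x‖ ≤ 1 := mem_closedBall_zero_iff.1 hx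
      exact (congrArg norm (fderiv_dampedSq u x)).trans_le <| (norm_dampedSqDeriv_le u x).trans
        (mul_le_of_le_one_right (by positivity) hx')
  have htrace := sum_inner_mul_inner_mul_polarization_le b (hQ.mem_PhomB _ hmem)
    (hQ.lipschitzWith _ hmem _ hLip) u
  calc ∑ i, ∑ j, projectionCoeff Q (basisPoint b i) (basisPoint b j)
        (weightedDampedSq (b i) (b j) u)
      = ∑ i, ∑ j, inner ℝ (b i) u * inner ℝ (b j) u *
          polarization (basisPoint b i) (basisPoint b j) (Q (ballRestrict E (dampedSqC1 u))) := by
        simp only [weightedDampedSq, map_smul, smul_eq_mul]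
        rfl
    _ ≤ ↑(K * (‖u‖₊ + 2)) * ‖u‖ ^ 2 := htrace
    _ = K * (‖u‖ ^ 2 * (‖u‖ + 2)) := by
        push_cast
        ring

variable [MeasurableSpace E] [BorelSpace E]

lemma integrable_projectionCoeff (hQ : IsQuadraticProjection Q K) (a c : UBall E) :
    Integrable (fun u => projectionCoeff Q a c (weightedDampedSq (a : E) c u)) (stdGaussian E) :=
  integrable_comp_of_abs_le_mul_norm (T := deLeeuw (UBall E) ∘ₗ ballRestrict E)
    (abs_projectionCoeff_le hQ a c) (integrable_deLeeuw_weightedDampedSq (a : E) c)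

lemma one_twelfth_le_integral_projectionCoeff (hQ : IsQuadraticProjection Q K) {a c : UBall E}
    (ha : ‖(a : E)‖ = 1) (hc : ‖(c : E)‖ = 1) :
    1 / 12 ≤ ∫ u, projectionCoeff Q a c (weightedDampedSq (a : E) c u) ∂stdGaussian E := by
  rw [integral_comp_eq_of_abs_le_mul_norm (T := deLeeuw (UBall E) ∘ₗ ballRestrict E)
    (abs_projectionCoeff_le hQ a c) (integrable_deLeeuw_weightedDampedSq (a : E) c)
    (deLeeuw_averagedForm_eq_integral (a : E) c), projectionCoeff_diagonalC1 hQ]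
  exact one_twelfth_le_polarization_averagedForm ha hc

end QuadraticProjection

section LowerBound

open MeasureTheory ProbabilityTheory
open scoped NNReal

variable {E : Type*} [NormedAddCommGroup E] [InnerProductSpace ℝ E] [FiniteDimensional ℝ E]
  [Nontrivial E] {Q : (UBall E → ℝ) →ₗ[ℝ] UBall E → ℝ} {K : ℝ≥0}

theorem sqrt_finrank_le_of_isQuadraticProjection (hQ : IsQuadraticProjection Q K) :
    √(Module.finrank ℝ E : ℝ) ≤ 48 * K := by
  borelize E
  let b := stdOrthonormalBasis ℝ E
  let coeff i j u := projectionCoeff Q (basisPoint b i) (basisPoint b j)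
    (weightedDampedSq (b i) (b j) u)
  set d := (Module.finrank ℝ E : ℝ)
  have hd : 0 < d := Nat.cast_pos.2 Module.finrank_pos
  have hint i j : Integrable (coeff i j) (stdGaussian E) := integrable_projectionCoeff hQ _ _
  have hbound : d ^ 2 * (1 / 12) ≤ K * (4 * d * √d) := calc
    d ^ 2 * (1 / 12) = ∑ i : Fin (Module.finrank ℝ E), ∑ j : Fin (Module.finrank ℝ E), 1 / 12 := by
      simp only [Finset.sum_const, Finset.card_univ, Fintype.card_fin, nsmul_eq_mul]
      ring
    _ ≤ ∑ i, ∑ j, ∫ u, coeff i j u ∂stdGaussian E := by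
      gcongr with i _ j _
      exact one_twelfth_le_integral_projectionCoeff hQ (b.norm_eq_one i) (b.norm_eq_one j)
    _ = ∫ u, ∑ i, ∑ j, coeff i j u ∂stdGaussian E := by
      simp only [integral_finsetSum _ fun i _ => integrable_finsetSum _ fun j _ => hint i j,
        integral_finsetSum _ fun j _ => hint _ j]
    _ ≤ ∫ u, K * (‖u‖ ^ 2 * (‖u‖ + 2)) ∂stdGaussian E := by
      refine integral_mono ?_ ?_ (sum_projectionCoeff_le b hQ)
      · exact integrable_finsetSum _ fun i _ => integrable_finsetSum _ fun j _ => hint i j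
      · exact integrable_norm_sq_mul_norm_add_two_stdGaussian.const_mul _
    _ ≤ K * (4 * d * √d) := by
      rw [integral_const_mul]
      gcongr
      exact integral_norm_sq_mul_norm_add_two_stdGaussian_le
  have hsq : √d ^ 2 = d := Real.sq_sqrt hd.le
  have hcancel : d * √d * √d ≤ d * √d * (48 * K) := by linear_combination 12 * hbound + d * hsq
  exact le_of_mul_le_mul_left hcancel (by positivity)

end LowerBound

lemma mul_rpow_mul_rpow_le_of_sqrt_le {d k : ℝ} (hd : 3 ≤ d) (hk : 1 ≤ k) (hdk : √d ≤ 48 * k) :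
    2 / 5 * ((√2 - 1) / 3 * (π / 72)) ^ ((1 : ℝ) / 5) * (d - 2 * √2) ^ ((1 : ℝ) / 5) ≤ k := by
  have hsqrt_one : 1 ≤ √2 := Real.one_le_sqrt.2 one_le_two
  have hsqrt_lt : √2 < 3 / 2 := (Real.sqrt_lt' (by norm_num)).2 (by norm_num)
  have hconst_nonneg : 0 ≤ (√2 - 1) / 3 * (π / 72) :=
    mul_nonneg (by linarith) (by positivity)
  have hconst_le : (√2 - 1) / 3 * (π / 72) ≤ 1 / 2 / 3 * (4 / 72) := by
    gcongr
    · linarith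
    · exact Real.pi_le_four
  have hd_le : d ≤ (48 * k) ^ 2 := (Real.sqrt_le_left (by linarith)).1 hdk
  have hk_pow : k ^ 2 ≤ k ^ 5 := pow_le_pow_right₀ hk (by norm_num)
  have hroot : (2 / 5 : ℝ) = ((2 / 5) ^ (5 : ℝ)) ^ ((1 : ℝ) / 5) := by
    rw [← Real.rpow_mul (by norm_num)]
    norm_num
  rw [hroot, ← Real.mul_rpow (by positivity) hconst_nonneg,
    ← Real.mul_rpow (by positivity) (by linarith), one_div,
    Real.rpow_inv_le_iff_of_pos (mul_nonneg (by positivity) (by linarith)) (by linarith)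
      (by norm_num)]
  norm_cast
  calc (2 / 5) ^ 5 * ((√2 - 1) / 3 * (π / 72)) * (d - 2 * √2)
      ≤ (2 / 5) ^ 5 * (1 / 2 / 3 * (4 / 72)) * (48 * k) ^ 2 := by
        gcongr
        · linarith
        · linarith
    _ ≤ k ^ 5 := by nlinarith

theorem statement0_general {E : Type*} [NormedAddCommGroup E] [InnerProductSpace ℝ E]
    [FiniteDimensional ℝ E] (hE : 3 ≤ Module.finrank ℝ E)
    {Q : (UBall E → ℝ) →ₗ[ℝ] UBall E → ℝ} {K : NNReal} (hQ : IsQuadraticProjection Q K) :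
    2 / 5 * ((√2 - 1) / 3 * (π / 72)) ^ ((1 : ℝ) / 5) *
      ((Module.finrank ℝ E : ℝ) - 2 * √2) ^ ((1 : ℝ) / 5) ≤ K := by
  have : Nontrivial E := Module.nontrivial_of_finrank_pos (R := ℝ) (by omega)
  exact mul_rpow_mul_rpow_le_of_sqrt_le (by exact_mod_cast hE)
    (by exact_mod_cast one_le_of_isQuadraticProjection hQ)
    (sqrt_finrank_le_of_isQuadraticProjection hQ)

/-- **Theorem A (for `C₀¹`).** If `Q` is any bounded linear projection from
`C₀¹(B_{E_n})` onto `P(²E_n)` (the latter viewed inside functions on the ball via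
restriction), and `K` bounds its operator norm with respect to the Lipschitz norm, then
`K ≥ (2/5)·((√2 − 1)/3 · π/72)^{1/5} · (n − 2√2)^{1/5}`. -/
theorem statement0 (n : ℕ) (hn : 3 ≤ n)
    (Q : (↥(UBall (EuclideanSpace ℝ (Fin n))) → ℝ) →ₗ[ℝ]
         (↥(UBall (EuclideanSpace ℝ (Fin n))) → ℝ))
    (hrange : ∀ f ∈ C01B (EuclideanSpace ℝ (Fin n)), Q f ∈ PhomB 2 (EuclideanSpace ℝ (Fin n)))
    (hproj : ∀ f ∈ PhomB 2 (EuclideanSpace ℝ (Fin n)), Q f = f)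
    (K : NNReal)
    (hK : ∀ f ∈ C01B (EuclideanSpace ℝ (Fin n)), ∀ L : NNReal,
      LipschitzWith L f → LipschitzWith (K * L) (Q f)) :
    (2 / 5) * ((Real.sqrt 2 - 1) / 3 * (Real.pi / 72)) ^ ((1 : ℝ) / 5)
      * ((n : ℝ) - 2 * Real.sqrt 2) ^ ((1 : ℝ) / 5) ≤ (K : ℝ) := by
  simpa only [finrank_euclideanSpace_fin] using statement0_general
    (E := EuclideanSpace ℝ (Fin n)) (by simpa using hn) ⟨hrange, hproj, hK⟩
end
end

section
/- Let n ≥ 3 and let E_n = (ℝⁿ, ‖·‖₂) be the n-dimensional Euclidean space. If Q is any bounded linear projection from Lip₀(B_{E_n}) onto P(²E_n) (the latter viewed as a subspace of Lip₀(B_{E_n}) via restriction of polynomials to the unit ball), then ‖Q‖ ≥ C·(n − 2√2)^{1/5}, where C = (2/5)·((√2 − 1)/3 · π/72)^{1/5}. -/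
open Metric Set Real

noncomputable section

/-!
Let `v₁, …, v_N` be orthonormal, `ε` random signs, `s = ∑ εᵢ vᵢ` and `z = τ s`. The function
`1 - cos ⟪z, x⟫` is only `‖z‖`-Lipschitz on the ball, whereas its quadratic Taylor polynomial
`⟪z, x⟫ ^ 2 / 2`, which `Q` fixes, takes the value `‖z‖ ^ 4 / 2` at `z`. Hence the quadratic form
`A_ε` of the `Q`-image of the Taylor remainder is at most `‖Q‖ ‖z‖ ^ 3 - ‖z‖ ^ 4 / 2` at `z`. On the
other hand `A_ε(s, s) = ∑ εᵢ εⱼ A_ε(vᵢ, vⱼ)`, and `𝔼 εᵢ εⱼ A_ε` is the form of the `Q`-image of a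
signed average of the remainders, whose Lipschitz constant is at most `2 τ ^ 3` by the fourth-moment
Khintchine inequality, independently of `N`. At `τ = N ^ (-1/4)` all terms have the same order in
`N`, and the comparison gives `N ^ (1/4) ≤ 6 ‖Q‖`.
-/

open scoped BigOperators InnerProductSpace

section Rademacher

lemma abs_units_int_cast (u : ℤˣ) : |((u : ℤ) : ℝ)| = 1 := by
  rcases Int.units_eq_one_or u with rfl | rfl <;> simp

variable {ι : Type*} [Fintype ι] [DecidableEq ι]

lemma expect_signs_insert (F : ℝ → ℝ) (x : ι → ℝ) {a : ι} {s : Finset ι} (ha : a ∉ s) :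
    𝔼 ε : ι → ℤˣ, F (∑ i ∈ insert a s, ((ε i : ℤ) : ℝ) * x i) =
      𝔼 ε : ι → ℤˣ, (F (x a + ∑ i ∈ s, ((ε i : ℤ) : ℝ) * x i) +
        F (-x a + ∑ i ∈ s, ((ε i : ℤ) : ℝ) * x i)) / 2 := by
  simp only [Finset.sum_insert ha]
  have flip : 𝔼 ε : ι → ℤˣ, F (((ε a : ℤ) : ℝ) * x a + ∑ i ∈ s, ((ε i : ℤ) : ℝ) * x i) =
      𝔼 ε : ι → ℤˣ, F (-(((ε a : ℤ) : ℝ) * x a) + ∑ i ∈ s, ((ε i : ℤ) : ℝ) * x i) := by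
    refine Fintype.expect_equiv (Equiv.mulRight (Pi.mulSingle a (-1))) _ _ fun ε ↦ ?_
    have fixed : ∀ i ∈ s, (Pi.mulSingle a (-1) : ι → ℤˣ) i = 1 := fun i hi ↦
      Pi.mulSingle_eq_of_ne (ne_of_mem_of_not_mem hi ha) _
    simp +contextual [fixed]
  rw [← add_self_div_two (𝔼 ε : ι → ℤˣ, F _)]
  nth_rewrite 2 [flip]
  rw [← Finset.expect_add_distrib, Finset.expect_div]
  refine Finset.expect_congr rfl fun ε _ ↦ ?_
  rcases Int.units_eq_one_or (ε a) with h | h <;> simp [h, add_comm]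

lemma expect_signs_sum_sq (x : ι → ℝ) (s : Finset ι) :
    𝔼 ε : ι → ℤˣ, (∑ i ∈ s, ((ε i : ℤ) : ℝ) * x i) ^ 2 = ∑ i ∈ s, x i ^ 2 := by
  induction s using Finset.induction_on with
  | empty => simp
  | insert a s ha ih =>
    have expand (S : ℝ) : ((x a + S) ^ 2 + (-x a + S) ^ 2) / 2 = x a ^ 2 + S ^ 2 := by ring
    rw [expect_signs_insert (· ^ 2) x ha]
    simp only [expand, Finset.expect_add_distrib, Fintype.expect_const, ih, Finset.sum_insert ha]

lemma expect_signs_sum_pow_four_le (x : ι → ℝ) (s : Finset ι) :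
    𝔼 ε : ι → ℤˣ, (∑ i ∈ s, ((ε i : ℤ) : ℝ) * x i) ^ 4 ≤ 3 * (∑ i ∈ s, x i ^ 2) ^ 2 := by
  induction s using Finset.induction_on with
  | empty => simp
  | insert a s ha ih =>
    have expand (S : ℝ) : ((x a + S) ^ 4 + (-x a + S) ^ 4) / 2 =
        x a ^ 4 + 6 * x a ^ 2 * S ^ 2 + S ^ 4 := by ring
    rw [expect_signs_insert (· ^ 4) x ha]
    simp only [expand, Finset.expect_add_distrib, Fintype.expect_const, ← Finset.mul_expect,
      expect_signs_sum_sq, Finset.sum_insert ha]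
    linarith [show 0 ≤ x a ^ 4 by positivity]

end Rademacher

section RandomVector

variable {ι E : Type*} [Fintype ι] [NormedAddCommGroup E] [InnerProductSpace ℝ E]

/-- The signed sum `∑ εᵢ vᵢ` of the vectors `vᵢ`. -/
def signedSum (v : ι → E) (ε : ι → ℤˣ) : E := ∑ i, ((ε i : ℤ) : ℝ) • v i

lemma inner_signedSum (v : ι → E) (ε : ι → ℤˣ) (x : E) :
    ⟪signedSum v ε, x⟫_ℝ = ∑ i, ((ε i : ℤ) : ℝ) * ⟪v i, x⟫_ℝ := by
  simp only [signedSum, sum_inner, real_inner_smul_left]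

variable {v : ι → E}

lemma norm_signedSum (hv : Orthonormal ℝ v) (ε : ι → ℤˣ) :
    ‖signedSum v ε‖ = √(Fintype.card ι) := by
  rw [norm_eq_sqrt_real_inner, signedSum, hv.inner_sum]
  simp [← Int.cast_mul]

variable [DecidableEq ι]

lemma expect_inner_signedSum_sq_le (hv : Orthonormal ℝ v) (x : E) :
    𝔼 ε : ι → ℤˣ, ⟪signedSum v ε, x⟫_ℝ ^ 2 ≤ ‖x‖ ^ 2 := by
  simp only [inner_signedSum, expect_signs_sum_sq]
  simpa using hv.sum_inner_products_le x (s := Finset.univ)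

lemma expect_inner_signedSum_pow_four_le (hv : Orthonormal ℝ v) (x : E) :
    𝔼 ε : ι → ℤˣ, ⟪signedSum v ε, x⟫_ℝ ^ 4 ≤ 3 * ‖x‖ ^ 4 := by
  have bessel : ∑ i, ⟪v i, x⟫_ℝ ^ 2 ≤ ‖x‖ ^ 2 := by
    simpa using hv.sum_inner_products_le x (s := Finset.univ)
  simp only [inner_signedSum]
  calc _ ≤ 3 * (∑ i, ⟪v i, x⟫_ℝ ^ 2) ^ 2 := expect_signs_sum_pow_four_le _ _
    _ ≤ 3 * (‖x‖ ^ 2) ^ 2 := by gcongr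
    _ = 3 * ‖x‖ ^ 4 := by ring

lemma expect_abs_inner_signedSum_mul_sq_le (hv : Orthonormal ℝ v) (h x : E) :
    𝔼 ε : ι → ℤˣ, |⟪signedSum v ε, h⟫_ℝ| * ⟪signedSum v ε, x⟫_ℝ ^ 2 ≤ 2 * ‖h‖ * ‖x‖ ^ 2 := by
  refine le_of_sq_le_sq ?_ (by positivity)
  calc _ ≤ (𝔼 ε : ι → ℤˣ, |⟪signedSum v ε, h⟫_ℝ| ^ 2) *
        𝔼 ε : ι → ℤˣ, (⟪signedSum v ε, x⟫_ℝ ^ 2) ^ 2 := Finset.expect_mul_sq_le_sq_mul_sq ..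
    _ = (𝔼 ε : ι → ℤˣ, ⟪signedSum v ε, h⟫_ℝ ^ 2) * 𝔼 ε : ι → ℤˣ, ⟪signedSum v ε, x⟫_ℝ ^ 4 := by
      simp only [sq_abs, ← pow_mul, Nat.reduceMul]
    _ ≤ ‖h‖ ^ 2 * (3 * ‖x‖ ^ 4) :=
      mul_le_mul (expect_inner_signedSum_sq_le hv h) (expect_inner_signedSum_pow_four_le hv x)
        (Finset.expect_nonneg fun _ _ ↦ by positivity) (by positivity)
    _ ≤ (2 * ‖h‖ * ‖x‖ ^ 2) ^ 2 := by
      linarith [show 0 ≤ ‖h‖ ^ 2 * ‖x‖ ^ 4 by positivity]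

end RandomVector

section CosRemainder

lemma abs_sin_sub_self_le (t : ℝ) : |sin t - t| ≤ t ^ 2 / 2 := by
  rw [abs_sub_comm]
  rcases le_total |t| 3 with ht | ht
  · calc |t - sin t| ≤ |t| ^ 3 / 6 := abs_sub_sin_le t
      _ = |t| * |t| ^ 2 / 6 := by ring
      _ ≤ 3 * |t| ^ 2 / 6 := by gcongr
      _ = t ^ 2 / 2 := by rw [sq_abs]; ring
  · calc |t - sin t| ≤ |t| + |sin t| := abs_sub _ _
      _ ≤ |t| + 1 := by gcongr; exact abs_sin_le_one t
      _ ≤ |t| ^ 2 / 2 := by nlinarith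
      _ = t ^ 2 / 2 := by rw [sq_abs]

lemma sq_le_sq_add_sq_of_mem_uIcc {a b t : ℝ} (ht : t ∈ uIcc a b) : t ^ 2 ≤ a ^ 2 + b ^ 2 := by
  rcases mem_uIcc.1 ht with ⟨_, _⟩ | ⟨_, _⟩ <;> rcases le_total 0 t with _ | _ <;> nlinarith

/-- The second-order Taylor remainder of `1 - cos` at `0`. -/
def cosRemainder (t : ℝ) : ℝ := 1 - cos t - t ^ 2 / 2

lemma hasDerivAt_cosRemainder (t : ℝ) : HasDerivAt cosRemainder (sin t - t) t := by
  have h := ((hasDerivAt_cos t).const_sub 1).sub ((hasDerivAt_pow 2 t).div_const 2)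
  exact h.congr_deriv (by norm_num)

lemma abs_cosRemainder_sub_le (a b : ℝ) :
    |cosRemainder a - cosRemainder b| ≤ |a - b| * (a ^ 2 + b ^ 2) / 2 := by
  have mvt := (convex_uIcc a b).norm_image_sub_le_of_norm_hasDerivWithin_le
    (C := (a ^ 2 + b ^ 2) / 2) (fun t _ ↦ (hasDerivAt_cosRemainder t).hasDerivWithinAt)
    (fun t ht ↦ (abs_sin_sub_self_le t).trans (by gcongr; exact sq_le_sq_add_sq_of_mem_uIcc ht))
    right_mem_uIcc left_mem_uIcc
  simpa only [Real.norm_eq_abs, mul_comm, mul_div_assoc] using mvt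

end CosRemainder

section QuadraticForm

lemma expect_bilinForm_apply {κ V : Type*} [AddCommGroup V] [Module ℝ V] (s : Finset κ)
    (B : κ → LinearMap.BilinForm ℝ V) (x y : V) : (𝔼 k ∈ s, B k) x y = 𝔼 k ∈ s, B k x y := by
  simp only [Finset.expect, LinearMap.smul_apply, LinearMap.BilinForm.sum_apply]

variable {X : Type*} [NormedAddCommGroup X] [NormedSpace ℝ X]

lemma sq_mem_PhomB_two (l : X →L[ℝ] ℝ) : (fun x : UBall X ↦ l x ^ 2) ∈ PhomB 2 X :=
  ⟨(ContinuousMultilinearMap.mkPiAlgebra ℝ (Fin 2) ℝ).compContinuousLinearMap fun _ ↦ l,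
    fun x ↦ by simp⟩

lemma exists_isSymm_of_mem_PhomB_two {f : UBall X → ℝ} (hf : f ∈ PhomB 2 X) :
    ∃ B : LinearMap.BilinForm ℝ X, B.IsSymm ∧ ∀ x : UBall X, f x = B x x := by
  obtain ⟨M, hM⟩ := hf
  let B : LinearMap.BilinForm ℝ X :=
    ((continuousMultilinearCurryFin1 ℝ X ℝ : (X [×1]→L[ℝ] ℝ) →L[ℝ] X →L[ℝ] ℝ).comp
      M.curryLeft).toLinearMap₁₂
  have diag (x : UBall X) : B x x = M fun _ ↦ (x : X) := by
    change M _ = M _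
    congr 1
    ext i
    fin_cases i <;> rfl
  refine ⟨(1 / 2 : ℝ) • (B + B.flip), ⟨fun x y ↦ ?_⟩, fun x ↦ ?_⟩
  · simp only [LinearMap.smul_apply, LinearMap.add_apply, LinearMap.BilinForm.flip_apply,
      add_comm]
  · simp only [LinearMap.smul_apply, LinearMap.add_apply, LinearMap.BilinForm.flip_apply,
      smul_eq_mul, diag, hM]
    ring

lemma abs_apply_le_of_lipschitzWith_of_norm_eq_one {B : LinearMap.BilinForm ℝ X} (hB : B.IsSymm)
    {f : UBall X → ℝ} (hf : ∀ x : UBall X, f x = B x x) {L : NNReal} (hL : LipschitzWith L f)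
    {u w : X} (hu : ‖u‖ = 1) (hw : ‖w‖ = 1) : |B u w| ≤ L := by
  let p : UBall X := ⟨(1 / 2 : ℝ) • (u + w), mem_closedBall_zero_iff.2 <| by
    rw [norm_smul]
    norm_num
    linarith [norm_add_le u w]⟩
  let q : UBall X := ⟨(1 / 2 : ℝ) • (u - w), mem_closedBall_zero_iff.2 <| by
    rw [norm_smul]
    norm_num
    linarith [norm_sub_le u w]⟩
  have polarization : f p - f q = B u w := by
    simp only [hf, p, q, map_smul, map_add, map_sub, LinearMap.smul_apply, LinearMap.add_apply,
      LinearMap.sub_apply, smul_eq_mul, hB.eq w u]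
    ring
  have dist_eq : dist p q = 1 := by
    rw [Subtype.dist_eq, dist_eq_norm, ← hw]
    congr 1
    module
  simpa [Real.dist_eq, polarization, dist_eq] using hL.dist_le_mul p q

lemma abs_apply_le_of_lipschitzWith {B : LinearMap.BilinForm ℝ X} (hB : B.IsSymm)
    {f : UBall X → ℝ} (hf : ∀ x : UBall X, f x = B x x) {L : NNReal} (hL : LipschitzWith L f)
    (u w : X) : |B u w| ≤ L * (‖u‖ * ‖w‖) := by
  rcases eq_or_ne u 0 with rfl | hu
  · simp
  rcases eq_or_ne w 0 with rfl | hw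
  · simp
  have unit := abs_apply_le_of_lipschitzWith_of_norm_eq_one hB hf hL
    (norm_smul_inv_norm (𝕜 := ℝ) hu) (norm_smul_inv_norm (𝕜 := ℝ) hw)
  have scale : |B u w| = ‖u‖ * ‖w‖ * |B ((‖u‖⁻¹ : ℝ) • u) ((‖w‖⁻¹ : ℝ) • w)| := by
    simp only [map_smul, LinearMap.smul_apply, smul_eq_mul, abs_mul, abs_inv, abs_norm]
    field_simp [norm_ne_zero_iff.2 hu, norm_ne_zero_iff.2 hw]
  rw [scale, mul_comm]
  gcongr
  exact unit

end QuadraticForm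

section Ridge

variable {E : Type*} [NormedAddCommGroup E] [InnerProductSpace ℝ E]

/-- The ridge function `x ↦ φ ⟪z, x⟫` on the unit ball, with profile `φ` and direction `z`. -/
def ridge (φ : ℝ → ℝ) (z : E) : UBall E → ℝ := fun x ↦ φ ⟪z, (x : E)⟫_ℝ

lemma lipschitzWith_ridge {φ : ℝ → ℝ} {C : NNReal} (hφ : LipschitzWith C φ) (z : E) :
    LipschitzWith (C * ‖z‖₊) (ridge φ z) :=
  hφ.comp <| LipschitzWith.of_dist_le_mul fun x y ↦ by
    rw [Real.dist_eq, ← inner_sub_right, Subtype.dist_eq, dist_eq_norm]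
    exact abs_real_inner_le_norm _ _

lemma ridge_mem_Lip0B {φ : ℝ → ℝ} {C : NNReal} (hφ : LipschitzWith C φ) (hφ₀ : φ 0 = 0) (z : E) :
    ridge φ z ∈ Lip0B E :=
  ⟨⟨_, lipschitzWith_ridge hφ z⟩, by simp [ridge, zeroB, hφ₀]⟩

lemma ridge_sq_mem_PhomB_two (z : E) : ridge (· ^ 2) z ∈ PhomB 2 E :=
  sq_mem_PhomB_two (innerSL ℝ z)

lemma ridge_cosRemainder (z : E) :
    ridge cosRemainder z = ridge (1 - cos ·) z - (1 / 2 : ℝ) • ridge (· ^ 2) z := by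
  ext x
  simp only [ridge, cosRemainder, Pi.sub_apply, Pi.smul_apply, smul_eq_mul]
  ring

variable {ι : Type*} [Fintype ι] [DecidableEq ι] {v : ι → E}

lemma expect_abs_cosRemainder_inner_sub_le (hv : Orthonormal ℝ v) (τ : NNReal) {x y : E}
    (hx : ‖x‖ ≤ 1) (hy : ‖y‖ ≤ 1) :
    𝔼 ε : ι → ℤˣ, |cosRemainder ⟪(τ : ℝ) • signedSum v ε, x⟫_ℝ -
      cosRemainder ⟪(τ : ℝ) • signedSum v ε, y⟫_ℝ| ≤ 2 * τ ^ 3 * ‖x - y‖ := by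
  have moment {u : E} (hu : ‖u‖ ≤ 1) :
      𝔼 ε : ι → ℤˣ, |⟪signedSum v ε, x - y⟫_ℝ| * ⟪signedSum v ε, u⟫_ℝ ^ 2 ≤ 2 * ‖x - y‖ :=
    (expect_abs_inner_signedSum_mul_sq_le hv _ _).trans <|
      mul_le_of_le_one_right (by positivity) (pow_le_one₀ (norm_nonneg u) hu)
  calc _ ≤ 𝔼 ε : ι → ℤˣ, (τ : ℝ) ^ 3 / 2 *
        (|⟪signedSum v ε, x - y⟫_ℝ| * ⟪signedSum v ε, x⟫_ℝ ^ 2 +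
          |⟪signedSum v ε, x - y⟫_ℝ| * ⟪signedSum v ε, y⟫_ℝ ^ 2) := by
        refine Finset.expect_le_expect fun ε _ ↦ (abs_cosRemainder_sub_le _ _).trans_eq ?_
        simp only [real_inner_smul_left, ← mul_sub, ← inner_sub_right, abs_mul, NNReal.abs_eq]
        ring
    _ ≤ (τ : ℝ) ^ 3 / 2 * (2 * ‖x - y‖ + 2 * ‖x - y‖) := by
        rw [← Finset.mul_expect, Finset.expect_add_distrib]
        gcongr
        exacts [moment hx, moment hy]
    _ = 2 * τ ^ 3 * ‖x - y‖ := by ring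

lemma lipschitzWith_expect_ridge_cosRemainder (hv : Orthonormal ℝ v) (τ : NNReal)
    {c : (ι → ℤˣ) → ℝ} (hc : ∀ ε, |c ε| ≤ 1) :
    LipschitzWith (2 * τ ^ 3)
      (𝔼 ε, c ε • ridge cosRemainder ((τ : ℝ) • signedSum v ε)) := by
  refine LipschitzWith.of_dist_le_mul fun x y ↦ ?_
  rw [Real.dist_eq, Finset.expect_apply, Finset.expect_apply, ← Finset.expect_sub_distrib]
  calc _ ≤ 𝔼 ε, |ridge cosRemainder ((τ : ℝ) • signedSum v ε) x -
        ridge cosRemainder ((τ : ℝ) • signedSum v ε) y| := by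
        refine (Finset.abs_expect_le _ _).trans <| Finset.expect_le_expect fun ε _ ↦ ?_
        rw [Pi.smul_apply, Pi.smul_apply, ← smul_sub, smul_eq_mul, abs_mul]
        exact mul_le_of_le_one_left (abs_nonneg _) (hc ε)
    _ ≤ 2 * τ ^ 3 * ‖(x : E) - y‖ := expect_abs_cosRemainder_inner_sub_le hv τ
        (mem_closedBall_zero_iff.1 x.2) (mem_closedBall_zero_iff.1 y.2)
    _ = (2 * τ ^ 3 : NNReal) * dist x y := by
        rw [Subtype.dist_eq, dist_eq_norm]
        push_cast
        rfl

lemma expect_ridge_cosRemainder_mem_Lip0B (hv : Orthonormal ℝ v) (τ : NNReal)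
    {c : (ι → ℤˣ) → ℝ} (hc : ∀ ε, |c ε| ≤ 1) :
    𝔼 ε, c ε • ridge cosRemainder ((τ : ℝ) • signedSum v ε) ∈ Lip0B E :=
  ⟨⟨_, lipschitzWith_expect_ridge_cosRemainder hv τ hc⟩,
    by simp [Finset.expect_apply, ridge, zeroB, cosRemainder]⟩

end Ridge

/-- `Q` restricts to a linear projection of `Lip₀(B_X)` onto `P(ᵏX)` of norm at most `K`. The values
of `Q` outside `Lip₀(B_X)` are irrelevant. -/
structure IsPhomProjection (k : ℕ) {X : Type*} [NormedAddCommGroup X] [NormedSpace ℝ X]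
    (Q : (UBall X → ℝ) →ₗ[ℝ] (UBall X → ℝ)) (K : NNReal) : Prop where
  map_mem : ∀ f ∈ Lip0B X, Q f ∈ PhomB k X
  map_eq_self : ∀ f ∈ PhomB k X, Q f = f
  lipschitzWith_map : ∀ f ∈ Lip0B X, ∀ L : NNReal, LipschitzWith L f → LipschitzWith (K * L) (Q f)

section LowerBound

variable {E : Type*} [NormedAddCommGroup E] [InnerProductSpace ℝ E]
  {Q : (UBall E → ℝ) →ₗ[ℝ] (UBall E → ℝ)} {K : NNReal}

lemma exists_isSymm_map_ridge_cosRemainder (hQ : IsPhomProjection 2 Q K) (z : E) :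
    ∃ A : LinearMap.BilinForm ℝ E, A.IsSymm ∧
      (∀ x : UBall E, Q (ridge cosRemainder z) x = A x x) ∧
      A z z ≤ K * ‖z‖ ^ 3 - ‖z‖ ^ 4 / 2 := by
  have cos_lipschitz : LipschitzWith 1 (1 - cos ·) := by
    simpa using (LipschitzWith.const (1 : ℝ)).sub lipschitzWith_cos
  have cos_mem := ridge_mem_Lip0B cos_lipschitz (by simp) z
  obtain ⟨B, B_symm, hB⟩ := exists_isSymm_of_mem_PhomB_two (hQ.map_mem _ cos_mem)
  have B_le : |B z z| ≤ K * ‖z‖ * (‖z‖ * ‖z‖) := by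
    simpa using abs_apply_le_of_lipschitzWith B_symm hB
      (hQ.lipschitzWith_map _ cos_mem _ (lipschitzWith_ridge cos_lipschitz z)) z z
  have A_apply (x y : E) :
      (B - (1 / 2 : ℝ) • LinearMap.BilinForm.linMulLin (innerₛₗ ℝ z) (innerₛₗ ℝ z)) x y =
        B x y - ⟪z, x⟫_ℝ * ⟪z, y⟫_ℝ / 2 := by
    simp only [LinearMap.sub_apply, LinearMap.smul_apply, LinearMap.BilinForm.linMulLin_apply,
      innerₛₗ_apply_apply, smul_eq_mul]
    ring
  refine ⟨_, ⟨fun x y ↦ ?_⟩, fun x ↦ ?_, (A_apply z z).trans_le ?_⟩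
  · rw [A_apply, A_apply, B_symm.eq x y, mul_comm ⟪z, x⟫_ℝ]
  · rw [A_apply, ridge_cosRemainder, map_sub, map_smul,
      hQ.map_eq_self _ (ridge_sq_mem_PhomB_two z)]
    simp only [Pi.sub_apply, Pi.smul_apply, hB, ridge, smul_eq_mul]
    ring
  · rw [real_inner_self_eq_norm_sq]
    linarith [le_of_abs_le B_le]

variable {ι : Type*} [Fintype ι] {v : ι → E} {τ : NNReal}
  {A : (ι → ℤˣ) → LinearMap.BilinForm ℝ E}

lemma abs_expect_mul_apply_le [DecidableEq ι] (hQ : IsPhomProjection 2 Q K)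
    (hv : Orthonormal ℝ v) (hA : ∀ ε, (A ε).IsSymm)
    (hQA : ∀ ε (x : UBall E), Q (ridge cosRemainder ((τ : ℝ) • signedSum v ε)) x = A ε x x)
    {c : (ι → ℤˣ) → ℝ} (hc : ∀ ε, |c ε| ≤ 1) (u w : E) :
    |𝔼 ε, c ε * A ε u w| ≤ 2 * K * τ ^ 3 * (‖u‖ * ‖w‖) := by
  have form_apply (x y : E) : (𝔼 ε, c ε • A ε) x y = 𝔼 ε, c ε * A ε x y := by
    simp only [expect_bilinForm_apply, LinearMap.smul_apply, smul_eq_mul]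
  have form_symm : (𝔼 ε, c ε • A ε).IsSymm :=
    ⟨fun x y ↦ by simp only [form_apply, (hA _).eq y x]⟩
  have form_represents (x : UBall E) :
      Q (𝔼 ε, c ε • ridge cosRemainder ((τ : ℝ) • signedSum v ε)) x =
        (𝔼 ε, c ε • A ε) x x := by
    -- `map_expect` needs `Q` as a `ℚ≥0`-linear map
    change (Q.restrictScalars ℚ≥0) _ x = _
    rw [map_expect, Finset.expect_apply, form_apply]
    simp [hQA]
  have bound := abs_apply_le_of_lipschitzWith form_symm form_represents
    (hQ.lipschitzWith_map _ (expect_ridge_cosRemainder_mem_Lip0B hv τ hc) _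
      (lipschitzWith_expect_ridge_cosRemainder hv τ hc)) u w
  rw [form_apply] at bound
  refine bound.trans_eq ?_
  push_cast
  ring

lemma abs_expect_apply_signedSum_le [DecidableEq ι] (hQ : IsPhomProjection 2 Q K)
    (hv : Orthonormal ℝ v) (hA : ∀ ε, (A ε).IsSymm)
    (hQA : ∀ ε (x : UBall E), Q (ridge cosRemainder ((τ : ℝ) • signedSum v ε)) x = A ε x x) :
    |𝔼 ε, A ε (signedSum v ε) (signedSum v ε)| ≤ Fintype.card ι ^ 2 * (2 * K * τ ^ 3) := by
  have expand : 𝔼 ε, A ε (signedSum v ε) (signedSum v ε) =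
      ∑ i, ∑ j, 𝔼 ε : ι → ℤˣ, ((ε i : ℤ) : ℝ) * ((ε j : ℤ) : ℝ) * A ε (v i) (v j) := by
    simp only [← Finset.expect_sum_comm]
    refine Finset.expect_congr rfl fun ε _ ↦ ?_
    simp only [signedSum, LinearMap.BilinForm.sum_left, LinearMap.BilinForm.sum_right, map_smul,
      LinearMap.smul_apply, smul_eq_mul, Finset.mul_sum]
    rw [Finset.sum_comm]
    simp only [mul_assoc, mul_left_comm]
  have entry (i j : ι) :
      |𝔼 ε : ι → ℤˣ, ((ε i : ℤ) : ℝ) * ((ε j : ℤ) : ℝ) * A ε (v i) (v j)| ≤ 2 * K * τ ^ 3 := by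
    have signs_le (ε : ι → ℤˣ) : |((ε i : ℤ) : ℝ) * ((ε j : ℤ) : ℝ)| ≤ 1 := by
      rw [abs_mul, abs_units_int_cast, abs_units_int_cast, one_mul]
    simpa [hv.norm_eq_one] using abs_expect_mul_apply_le hQ hv hA hQA signs_le (v i) (v j)
  calc _ ≤ ∑ i, ∑ j, |𝔼 ε : ι → ℤˣ, ((ε i : ℤ) : ℝ) * ((ε j : ℤ) : ℝ) * A ε (v i) (v j)| := by
        rw [expand]
        exact (Finset.abs_sum_le_sum_abs _ _).trans <|
          Finset.sum_le_sum fun i _ ↦ Finset.abs_sum_le_sum_abs _ _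
    _ ≤ ∑ _i : ι, ∑ _j : ι, (2 * K * τ ^ 3 : ℝ) :=
        Finset.sum_le_sum fun i _ ↦ Finset.sum_le_sum fun j _ ↦ entry i j
    _ = Fintype.card ι ^ 2 * (2 * K * τ ^ 3) := by
        simp only [Finset.sum_const, Finset.card_univ, nsmul_eq_mul]
        ring

lemma mul_sqrt_card_pow_four_le (hQ : IsPhomProjection 2 Q K) (hv : Orthonormal ℝ v) (τ : NNReal) :
    (τ * √(Fintype.card ι)) ^ 4 / 2 ≤
      K * (τ * √(Fintype.card ι)) ^ 3 + τ ^ 2 * (Fintype.card ι ^ 2 * (2 * K * τ ^ 3)) := by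
  classical
  choose A A_symm hQA A_le using fun ε : ι → ℤˣ ↦
    exists_isSymm_map_ridge_cosRemainder hQ ((τ : ℝ) • signedSum v ε)
  simp only [norm_smul, norm_signedSum hv, NNReal.norm_eq, map_smul, LinearMap.smul_apply,
    smul_eq_mul, ← mul_assoc, ← sq] at A_le
  have average_le : (τ : ℝ) ^ 2 * 𝔼 ε, A ε (signedSum v ε) (signedSum v ε) ≤
      K * (τ * √(Fintype.card ι)) ^ 3 - (τ * √(Fintype.card ι)) ^ 4 / 2 := by
    rw [Finset.mul_expect]
    exact Finset.expect_le Finset.univ_nonempty fun ε _ ↦ A_le ε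
  have average_ge := neg_le_of_abs_le (abs_expect_apply_signedSum_le hQ hv A_symm hQA)
  linarith [mul_le_mul_of_nonneg_left average_ge (sq_nonneg (τ : ℝ))]

end LowerBound

lemma two_fifths_mul_rpow_le {x : ℝ} (hx : 3 ≤ x) :
    2 / 5 * ((√2 - 1) / 3 * (π / 72)) ^ ((1 : ℝ) / 5) * (x - 2 * √2) ^ ((1 : ℝ) / 5) ≤
      x ^ ((1 : ℝ) / 4) / 6 := by
  have one_le : (1 : ℝ) ≤ √2 := one_le_sqrt.2 (by norm_num)
  have le_three_halves : √2 ≤ 3 / 2 := (sqrt_le_left (by norm_num)).2 (by norm_num)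
  have base_nonneg : 0 ≤ (√2 - 1) / 3 * (π / 72) :=
    mul_nonneg (by linarith) (by positivity)
  have shift_nonneg : 0 ≤ x - 2 * √2 := by linarith
  have const_le : ((√2 - 1) / 3 * (π / 72)) ^ ((1 : ℝ) / 5) ≤ 5 / 12 := by
    have base_le : (√2 - 1) / 3 * (π / 72) ≤ (5 / 12) ^ 5 := calc
      (√2 - 1) / 3 * (π / 72) ≤ (3 / 2 - 1) / 3 * (4 / 72) := by gcongr; exact pi_le_four
      _ ≤ (5 / 12) ^ 5 := by norm_num
    calc _ ≤ (((5 : ℝ) / 12) ^ 5) ^ ((1 : ℝ) / 5) :=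
          rpow_le_rpow base_nonneg base_le (by norm_num)
      _ = 5 / 12 := by
          rw [one_div]
          exact pow_rpow_inv_natCast (by norm_num) (by norm_num)
  have root_le : (x - 2 * √2) ^ ((1 : ℝ) / 5) ≤ x ^ ((1 : ℝ) / 4) := calc
    _ ≤ x ^ ((1 : ℝ) / 5) := rpow_le_rpow shift_nonneg (by linarith) (by norm_num)
    _ ≤ x ^ ((1 : ℝ) / 4) := rpow_le_rpow_of_exponent_le (by linarith) (by norm_num)
  calc _ ≤ 2 / 5 * (5 / 12) * x ^ ((1 : ℝ) / 4) := by gcongr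
    _ = x ^ ((1 : ℝ) / 4) / 6 := by ring

theorem statement1_general {ι E : Type*} [Fintype ι] [NormedAddCommGroup E] [InnerProductSpace ℝ E]
    {v : ι → E} (hv : Orthonormal ℝ v) {Q : (UBall E → ℝ) →ₗ[ℝ] (UBall E → ℝ)} {K : NNReal}
    (hQ : IsPhomProjection 2 Q K) : (Fintype.card ι : ℝ) ^ ((1 : ℝ) / 4) / 6 ≤ K := by
  obtain ⟨r, hr⟩ : ∃ r : NNReal, (r : ℝ) = (Fintype.card ι : ℝ) ^ ((1 : ℝ) / 4) :=
    ⟨⟨_, by positivity⟩, rfl⟩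
  have card_eq : (Fintype.card ι : ℝ) = r ^ 4 := by
    rw [hr, ← rpow_natCast, ← rpow_mul (by positivity)]
    norm_num
  have sqrt_card_eq : √(Fintype.card ι) = r ^ 2 := by
    rw [card_eq, show (r : ℝ) ^ 4 = (r ^ 2) ^ 2 by ring, sqrt_sq (by positivity)]
  rw [← hr]
  rcases eq_zero_or_pos r with rfl | r_pos
  · simp
  have r_ne : (r : ℝ) ≠ 0 := by exact_mod_cast r_pos.ne'
  have comparison : (r : ℝ) ^ 4 / 2 ≤ 3 * K * r ^ 3 := by
    have scaled := mul_sqrt_card_pow_four_le hQ hv r⁻¹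
    rw [sqrt_card_eq, card_eq, NNReal.coe_inv] at scaled
    convert scaled using 1 <;> field_simp
    ring
  refine le_of_mul_le_mul_right ?_ (show (0 : ℝ) < r ^ 3 by positivity)
  linarith

/-- **Theorem A.** If `Q` is any bounded linear projection from `Lip₀(B_{E_n})` onto
`P(²E_n)` (the latter viewed inside functions on the ball via restriction), and `K`
bounds its operator norm with respect to the Lipschitz norm, then
`K ≥ (2/5)·((√2 − 1)/3 · π/72)^{1/5} · (n − 2√2)^{1/5}`. -/
theorem statement1 (n : ℕ) (hn : 3 ≤ n)
    (Q : (↥(UBall (EuclideanSpace ℝ (Fin n))) → ℝ) →ₗ[ℝ]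
         (↥(UBall (EuclideanSpace ℝ (Fin n))) → ℝ))
    (hrange : ∀ f ∈ Lip0B (EuclideanSpace ℝ (Fin n)), Q f ∈ PhomB 2 (EuclideanSpace ℝ (Fin n)))
    (hproj : ∀ f ∈ PhomB 2 (EuclideanSpace ℝ (Fin n)), Q f = f)
    (K : NNReal)
    (hK : ∀ f ∈ Lip0B (EuclideanSpace ℝ (Fin n)), ∀ L : NNReal,
      LipschitzWith L f → LipschitzWith (K * L) (Q f)) :
    (2 / 5) * ((Real.sqrt 2 - 1) / 3 * (Real.pi / 72)) ^ ((1 : ℝ) / 5)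
      * ((n : ℝ) - 2 * Real.sqrt 2) ^ ((1 : ℝ) / 5) ≤ (K : ℝ) := by
  have bound := statement1_general (EuclideanSpace.basisFun (Fin n) ℝ).orthonormal
    ⟨hrange, hproj, hK⟩
  exact (two_fifths_mul_rpow_le (Nat.ofNat_le_cast.2 hn)).trans (by simpa using bound)
end
end

section
/- Let X be an infinite-dimensional Banach space that contains uniformly complemented (ℓ₂ⁿ)_{n=1}^∞, i.e. there are a constant C ≥ 1 and a sequence (F_n)_{n=1}^∞ of subspaces of X such that, for each n, F_n is C-isomorphic to ℓ₂ⁿ and C-complemented in X. Then P(²X) is not complemented in Lip₀(B_X): there is no bounded linear projection from Lip₀(B_X) onto the image of P(²X) under the restriction embedding. -/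
/-!
Let `Q` be a projection onto `P(²X)` of norm `K`. Factoring the identity of `ℓ₂ⁿ` through `X`
transfers it, with a norm independent of `n`, to `X = ℓ₂ⁿ`. Test it on the truncated squares
`f_ε = h ∘ ⟪ε, ·⟫` of Rademacher sums, where `h` is the square on `[-M, M]` and continues linearly
outside. Without truncation `f_ε` would be fixed by `Q`, with Lipschitz constant of order `n`;
truncation lowers this to `2M√n`, so the quadratic form `q_ε = Q f_ε` satisfies
`|q_ε(ε)| ≤ 2KM√n · n`. On the other hand, `𝔼 ε_i ε_j f_ε` is `2 x_i x_j` up to an error which,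
by fourth moment estimates, is `M⁻¹`-Lipschitz whatever `n` is. As `Q` fixes `x_i x_j`, for `M ≥ 2K`
the `(i, j)` coefficient of `𝔼 ε_i ε_j q_ε` is bounded below for all `i ≠ j`, and summation over
`i, j` shows that `𝔼 q_ε(ε)` is at least of order `n²`. This is absurd for large `n`.
-/

open Metric Set Real

noncomputable section

open scoped NNReal BigOperators RealInnerProductSpace

section UnitBall

variable {X E : Type*} [NormedAddCommGroup X] [NormedSpace ℝ X] [NormedAddCommGroup E]
  [NormedSpace ℝ E] {k : ℕ}

/-- The map of unit balls induced by a linear contraction. -/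
def ballMap (τ : X →L[ℝ] E) (hτ : ‖τ‖ ≤ 1) (x : UBall X) : UBall E :=
  ⟨τ x, mem_closedBall_zero_iff.2 <| by
    simpa using τ.le_of_opNorm_le_of_le hτ (mem_closedBall_zero_iff.1 x.2)⟩

lemma lipschitzWith_ballMap (τ : X →L[ℝ] E) (hτ : ‖τ‖ ≤ 1) : LipschitzWith 1 (ballMap τ hτ) :=
  LipschitzWith.of_dist_le_mul fun x y => τ.lipschitz.weaken hτ |>.dist_le_mul x y

lemma ballMap_zeroB (τ : X →L[ℝ] E) (hτ : ‖τ‖ ≤ 1) : ballMap τ hτ (zeroB X) = zeroB E :=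
  Subtype.ext (map_zero τ)

lemma comp_ballMap_mem_Lip0B {f : UBall E → ℝ} (hf : f ∈ Lip0B E) (τ : X →L[ℝ] E)
    (hτ : ‖τ‖ ≤ 1) : f ∘ ballMap τ hτ ∈ Lip0B X := by
  obtain ⟨⟨L, hL⟩, hf₀⟩ := hf
  exact ⟨⟨_, hL.comp (lipschitzWith_ballMap τ hτ)⟩, by simp [ballMap_zeroB, hf₀]⟩

lemma comp_ballMap_mem_PhomB {f : UBall E → ℝ} (hf : f ∈ PhomB k E) (τ : X →L[ℝ] E)
    (hτ : ‖τ‖ ≤ 1) : f ∘ ballMap τ hτ ∈ PhomB k X := by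
  obtain ⟨M, hM⟩ := hf
  exact ⟨M.compContinuousLinearMap fun _ => τ, fun x => hM _⟩

lemma smul_mem_PhomB {f : UBall X → ℝ} (c : ℝ) (hf : f ∈ PhomB k X) : c • f ∈ PhomB k X := by
  obtain ⟨M, hM⟩ := hf
  exact ⟨c • M, fun x => by simp [hM]⟩

lemma eq_pow_mul_of_mem_PhomB {f : UBall X → ℝ} (hf : f ∈ PhomB k X) {c : ℝ} {x y : UBall X}
    (h : (x : X) = c • (y : X)) : f x = c ^ k * f y := by
  obtain ⟨M, hM⟩ := hf
  simp [hM, h, M.map_smul_univ]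

lemma mul_mem_PhomB_two (a b : X →L[ℝ] ℝ) : (fun x : UBall X => a x * b x) ∈ PhomB 2 X :=
  ⟨(ContinuousMultilinearMap.mkPiAlgebra ℝ (Fin 2) ℝ).compContinuousLinearMap ![a, b],
    fun x => by simp [Fin.prod_univ_two]⟩

lemma exists_quadraticForm_of_mem_PhomB {f : UBall X → ℝ} (hf : f ∈ PhomB 2 X) :
    ∃ q : QuadraticForm ℝ X, ∀ x : UBall X, f x = q x := by
  obtain ⟨M, hM⟩ := hf
  let B : LinearMap.BilinForm ℝ X :=
    (MultilinearMap.ofSubsingletonₗ ℝ ℝ X ℝ (0 : Fin 1)).symm.toLinearMap ∘ₗ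
      M.toMultilinearMap.curryLeft
  refine ⟨B.toQuadraticMap, fun x => (hM x).trans ?_⟩
  change M _ = M (Fin.cons _ _)
  congr 1
  ext i
  fin_cases i <;> rfl

lemma abs_quadraticForm_le_of_lipschitzWith {f : UBall X → ℝ} {q : QuadraticForm ℝ X} {L : ℝ≥0}
    (hf : LipschitzWith L f) (hq : ∀ x : UBall X, f x = q x) (x : X) : |q x| ≤ L * ‖x‖ ^ 2 := by
  rcases eq_or_ne x 0 with rfl | hx
  · simp
  have hx₀ : 0 < ‖x‖ := norm_pos_iff.2 hx
  have h := hf.dist_le_mul ⟨‖x‖⁻¹ • x, by simp [UBall, norm_smul, hx₀.ne']⟩ (zeroB X)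
  have h' : ‖x‖⁻¹ * ‖x‖⁻¹ * |q x| ≤ L := by
    simpa [Subtype.dist_eq, zeroB, hq, QuadraticMap.map_smul, norm_smul, hx₀.ne'] using h
  calc |q x| = ‖x‖⁻¹ * ‖x‖⁻¹ * |q x| * ‖x‖ ^ 2 := by field_simp
    _ ≤ L * ‖x‖ ^ 2 := by gcongr

end UnitBall

/-- `Q` is a linear projection from `Lip₀(B_X)` onto `P(ᵏX)` of norm at most `K`. As linear maps
extend from subspaces, `Q` may be taken to be defined on all functions on the ball. -/
structure IsPolynomialProjection {X : Type*} [NormedAddCommGroup X] [NormedSpace ℝ X] (k : ℕ)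
    (Q : (UBall X → ℝ) →ₗ[ℝ] (UBall X → ℝ)) (K : ℝ≥0) : Prop where
  mem_PhomB : ∀ f ∈ Lip0B X, Q f ∈ PhomB k X
  map_eq_self : ∀ f ∈ PhomB k X, Q f = f
  lipschitzWith : ∀ f ∈ Lip0B X, ∀ L : ℝ≥0, LipschitzWith L f → LipschitzWith (K * L) (Q f)

namespace IsPolynomialProjection

variable {X E : Type*} [NormedAddCommGroup X] [NormedSpace ℝ X] [NormedAddCommGroup E]
  [NormedSpace ℝ E] {k : ℕ} {Q : (UBall X → ℝ) →ₗ[ℝ] (UBall X → ℝ)} {K : ℝ≥0}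

lemma exists_of_comp_eq_smul (hQ : IsPolynomialProjection k Q K) {τ : X →L[ℝ] E}
    {J : E →L[ℝ] X} (hτ : ‖τ‖ ≤ 1) (hJ : ‖J‖ ≤ 1) {c : ℝ≥0} (hc : c ≠ 0)
    (hτJ : ∀ v, τ (J v) = c • v) :
    ∃ Q' : (UBall E → ℝ) →ₗ[ℝ] (UBall E → ℝ), IsPolynomialProjection k Q' ((c ^ k)⁻¹ * K) := by
  refine ⟨(((c ^ k)⁻¹ : ℝ≥0) : ℝ) • LinearMap.funLeft ℝ ℝ (ballMap J hJ) ∘ₗ Q ∘ₗ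
    LinearMap.funLeft ℝ ℝ (ballMap τ hτ), fun f hf => ?_, fun f hf => ?_, fun f hf L hL => ?_⟩
  · exact smul_mem_PhomB _ <|
      comp_ballMap_mem_PhomB (hQ.mem_PhomB _ <| comp_ballMap_mem_Lip0B hf τ hτ) J hJ
  · funext v
    have hQf := hQ.map_eq_self _ (comp_ballMap_mem_PhomB hf τ hτ)
    have hv : f (ballMap τ hτ (ballMap J hJ v)) = c ^ k * f v :=
      eq_pow_mul_of_mem_PhomB hf (hτJ v)
    change (((c ^ k)⁻¹ : ℝ≥0) : ℝ) * Q (f ∘ ballMap τ hτ) (ballMap J hJ v) = f v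
    rw [hQf, Function.comp_apply, hv, NNReal.coe_inv, NNReal.coe_pow,
      inv_mul_cancel_left₀ (by positivity)]
  · have hfτ : LipschitzWith L (f ∘ ballMap τ hτ) := by
      simpa using hL.comp (lipschitzWith_ballMap τ hτ)
    have hQf := (hQ.lipschitzWith _ (comp_ballMap_mem_Lip0B hf τ hτ) L hfτ).comp
      (lipschitzWith_ballMap J hJ)
    have hsmul := (lipschitzWith_smul (((c ^ k)⁻¹ : ℝ≥0) : ℝ)).comp hQf
    rw [NNReal.nnnorm_eq, mul_one, ← mul_assoc] at hsmul
    exact hsmul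

lemma exists_quadraticForm (hQ : IsPolynomialProjection 2 Q K) {f : UBall X → ℝ}
    (hf : f ∈ Lip0B X) {L : ℝ≥0} (hL : LipschitzWith L f) :
    ∃ q : QuadraticForm ℝ X, (∀ x : UBall X, Q f x = q x) ∧ ∀ x, |q x| ≤ K * L * ‖x‖ ^ 2 := by
  obtain ⟨q, hq⟩ := exists_quadraticForm_of_mem_PhomB (hQ.mem_PhomB f hf)
  exact ⟨q, hq, mod_cast abs_quadraticForm_le_of_lipschitzWith (hQ.lipschitzWith f hf L hL) hq⟩

end IsPolynomialProjection

section Rademacher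

variable {ι : Type*}

/-- The vector of signs `(ε i)ᵢ`, as a point of Euclidean space. For uniformly distributed `ε`,
`ε ↦ ⟪signVec ε, x⟫` is the Rademacher sum with coefficients `x`; expectations over `ε` are finite
averages `𝔼`. -/
def signVec (ε : ι → ℤˣ) : EuclideanSpace ℝ ι := WithLp.toLp 2 fun i => ((ε i : ℤ) : ℝ)

lemma signVec_mul_self (ε : ι → ℤˣ) (i : ι) : signVec ε i * signVec ε i = 1 := by
  simp only [signVec, ← Int.cast_mul, ← Units.val_mul, Int.units_mul_self, Units.val_one,
    Int.cast_one]

lemma abs_signVec (ε : ι → ℤˣ) (i : ι) : |signVec ε i| = 1 :=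
  (abs_eq zero_le_one).2 (mul_self_eq_one_iff.1 (signVec_mul_self ε i))

lemma signVec_mul_mulSingle_neg_one [DecidableEq ι] (ε : ι → ℤˣ) (i : ι) :
    signVec (ε * Pi.mulSingle i (-1)) =
      signVec ε - (2 * signVec ε i) • EuclideanSpace.single i (1 : ℝ) := by
  ext j
  rcases eq_or_ne j i with rfl | hj
  · simp only [signVec, Pi.mul_apply, Units.val_mul, Int.cast_mul, Pi.mulSingle_eq_same,
      Units.val_neg, Units.val_one, Int.cast_neg, Int.cast_one, PiLp.sub_apply,
      PiLp.smul_apply, PiLp.single_eq_same, smul_eq_mul]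
    ring
  · simp [signVec, hj]

variable [Fintype ι]

lemma norm_signVec_sq (ε : ι → ℤˣ) : ‖signVec ε‖ ^ 2 = Fintype.card ι := by
  rw [EuclideanSpace.real_norm_sq_eq]
  simp [sq, signVec_mul_self]

lemma inner_signVec_eq_sum (ε : ι → ℤˣ) (x : EuclideanSpace ℝ ι) :
    ⟪signVec ε, x⟫ = ∑ i, x i * signVec ε i := by
  simp [PiLp.inner_apply]

variable [DecidableEq ι]

lemma inner_signVec_mul_mulSingle_neg_one (ε : ι → ℤˣ) (i : ι) (x : EuclideanSpace ℝ ι) :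
    ⟪signVec (ε * Pi.mulSingle i (-1)), x⟫ = ⟪signVec ε, x⟫ - 2 * signVec ε i * x i := by
  simp [signVec_mul_mulSingle_neg_one, inner_sub_left, real_inner_smul_left,
    EuclideanSpace.inner_single_left]

/-- A discrete integration by parts, obtained by averaging over the flip of the `i`-th sign. -/
lemma expect_signVec_mul (i : ι) (g : (ι → ℤˣ) → ℝ) :
    𝔼 ε, signVec ε i * g ε =
      𝔼 ε, signVec ε i * ((g ε - g (ε * Pi.mulSingle i (-1))) / 2) := by
  have hflip : 𝔼 ε, signVec ε i * g ε =
      𝔼 ε, -(signVec ε i * g (ε * Pi.mulSingle i (-1))) := by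
    refine Fintype.expect_equiv (Equiv.mulRight (Pi.mulSingle i (-1))) _ _ fun ε => ?_
    simp [signVec, mul_assoc, ← Pi.mulSingle_mul]
  calc 𝔼 ε, signVec ε i * g ε
      = (𝔼 ε, signVec ε i * g ε + 𝔼 ε, -(signVec ε i * g (ε * Pi.mulSingle i (-1)))) / 2 := by
        rw [← hflip, add_self_div_two]
    _ = _ := by
        rw [← Finset.expect_add_distrib, Finset.expect_div]
        exact Finset.expect_congr rfl fun ε _ => by ring

lemma expect_signVec_mul_inner (i : ι) (x : EuclideanSpace ℝ ι) :
    𝔼 ε, signVec ε i * ⟪signVec ε, x⟫ = x i := by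
  have h (ε : ι → ℤˣ) : signVec ε i *
      ((⟪signVec ε, x⟫ - ⟪signVec (ε * Pi.mulSingle i (-1)), x⟫) / 2) = x i := by
    rw [inner_signVec_mul_mulSingle_neg_one]
    linear_combination x i * signVec_mul_self ε i
  rw [expect_signVec_mul]
  simp only [h, Fintype.expect_const]

lemma expect_signVec_mul_signVec {i j : ι} (hij : i ≠ j) :
    𝔼 ε : ι → ℤˣ, signVec ε i * signVec ε j = 0 := by
  simpa [EuclideanSpace.inner_single_right, hij] using
    expect_signVec_mul_inner i (EuclideanSpace.single j (1 : ℝ))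

lemma expect_inner_signVec_sq (x : EuclideanSpace ℝ ι) : 𝔼 ε, ⟪signVec ε, x⟫ ^ 2 = ‖x‖ ^ 2 := by
  have h (ε : ι → ℤˣ) : ⟪signVec ε, x⟫ ^ 2 = ∑ i, x i * (signVec ε i * ⟪signVec ε, x⟫) := by
    simp only [← mul_assoc, ← Finset.sum_mul, ← inner_signVec_eq_sum, sq]
  rw [EuclideanSpace.real_norm_sq_eq]
  simp only [h, Finset.expect_sum_comm, ← Finset.mul_expect, expect_signVec_mul_inner, sq]

lemma expect_signVec_mul_inner_sq {i j : ι} (hij : i ≠ j) (x : EuclideanSpace ℝ ι) :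
    𝔼 ε, signVec ε i * (signVec ε j * ⟪signVec ε, x⟫ ^ 2) = 2 * (x i * x j) := by
  have hj (ε : ι → ℤˣ) : signVec (ε * Pi.mulSingle i (-1)) j = signVec ε j := by
    simp [signVec, hij.symm]
  have h (ε : ι → ℤˣ) : signVec ε i * ((signVec ε j * ⟪signVec ε, x⟫ ^ 2 -
      signVec (ε * Pi.mulSingle i (-1)) j * ⟪signVec (ε * Pi.mulSingle i (-1)), x⟫ ^ 2) / 2) =
      2 * x i * (signVec ε j * ⟪signVec ε, x⟫) - 2 * x i ^ 2 * (signVec ε i * signVec ε j) := by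
    rw [hj, inner_signVec_mul_mulSingle_neg_one]
    linear_combination (2 * x i * (signVec ε j * ⟪signVec ε, x⟫) -
      2 * x i ^ 2 * (signVec ε i * signVec ε j)) * signVec_mul_self ε i
  rw [expect_signVec_mul]
  simp only [h, Finset.expect_sub_distrib, ← Finset.mul_expect, expect_signVec_mul_inner,
    expect_signVec_mul_signVec hij]
  ring

lemma expect_signVec_mul_inner_pow_three (i : ι) (x : EuclideanSpace ℝ ι) :
    𝔼 ε, signVec ε i * ⟪signVec ε, x⟫ ^ 3 = 3 * x i * ‖x‖ ^ 2 - 2 * x i ^ 3 := by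
  have h (ε : ι → ℤˣ) : signVec ε i *
      ((⟪signVec ε, x⟫ ^ 3 - ⟪signVec (ε * Pi.mulSingle i (-1)), x⟫ ^ 3) / 2) =
      3 * x i * ⟪signVec ε, x⟫ ^ 2 - 6 * x i ^ 2 * (signVec ε i * ⟪signVec ε, x⟫) +
        4 * x i ^ 3 := by
    rw [inner_signVec_mul_mulSingle_neg_one]
    linear_combination (3 * x i * ⟪signVec ε, x⟫ ^ 2 -
      6 * x i ^ 2 * (signVec ε i * ⟪signVec ε, x⟫) +
      4 * x i ^ 3 * (1 + signVec ε i * signVec ε i)) * signVec_mul_self ε i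
  rw [expect_signVec_mul]
  simp only [h, Finset.expect_add_distrib, Finset.expect_sub_distrib, ← Finset.mul_expect,
    expect_inner_signVec_sq, expect_signVec_mul_inner, Fintype.expect_const]
  ring

lemma expect_inner_signVec_pow_four (x : EuclideanSpace ℝ ι) :
    𝔼 ε, ⟪signVec ε, x⟫ ^ 4 = 3 * ‖x‖ ^ 4 - 2 * ∑ i, x i ^ 4 := by
  have h (ε : ι → ℤˣ) : ⟪signVec ε, x⟫ ^ 4 = ∑ i, x i * (signVec ε i * ⟪signVec ε, x⟫ ^ 3) := by
    simp only [← mul_assoc, ← Finset.sum_mul, ← inner_signVec_eq_sum]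
    ring
  calc 𝔼 ε, ⟪signVec ε, x⟫ ^ 4
      = ∑ i, x i * (3 * x i * ‖x‖ ^ 2 - 2 * x i ^ 3) := by
        simp only [h, Finset.expect_sum_comm, ← Finset.mul_expect,
          expect_signVec_mul_inner_pow_three]
    _ = ∑ i, (3 * ‖x‖ ^ 2 * x i ^ 2 - 2 * x i ^ 4) := Finset.sum_congr rfl fun i _ => by ring
    _ = 3 * ‖x‖ ^ 4 - 2 * ∑ i, x i ^ 4 := by
        rw [Finset.sum_sub_distrib, ← Finset.mul_sum, ← Finset.mul_sum,
          ← EuclideanSpace.real_norm_sq_eq]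
        ring

lemma expect_inner_signVec_pow_four_le (x : EuclideanSpace ℝ ι) :
    𝔼 ε, ⟪signVec ε, x⟫ ^ 4 ≤ 3 * ‖x‖ ^ 4 := by
  rw [expect_inner_signVec_pow_four]
  exact sub_le_self _ (by positivity)

lemma expect_abs_inner_signVec_mul_le (x y z : EuclideanSpace ℝ ι) :
    𝔼 ε, |⟪signVec ε, z⟫| * (⟪signVec ε, x⟫ ^ 2 + ⟪signVec ε, y⟫ ^ 2) ≤
      ‖z‖ * √(6 * (‖x‖ ^ 4 + ‖y‖ ^ 4)) := by
  have hsq (ε : ι → ℤˣ) : (⟪signVec ε, x⟫ ^ 2 + ⟪signVec ε, y⟫ ^ 2) ^ 2 ≤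
      2 * (⟪signVec ε, x⟫ ^ 4 + ⟪signVec ε, y⟫ ^ 4) := by
    linarith [add_sq_le (a := ⟪signVec ε, x⟫ ^ 2) (b := ⟪signVec ε, y⟫ ^ 2)]
  have h4 : 𝔼 ε, (⟪signVec ε, x⟫ ^ 2 + ⟪signVec ε, y⟫ ^ 2) ^ 2 ≤ 6 * (‖x‖ ^ 4 + ‖y‖ ^ 4) := by
    refine (Finset.expect_le_expect fun ε _ => hsq ε).trans ?_
    rw [← Finset.mul_expect, Finset.expect_add_distrib]
    linarith [expect_inner_signVec_pow_four_le x, expect_inner_signVec_pow_four_le y]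
  refine (le_abs_self _).trans (abs_le_of_sq_le_sq ?_ (by positivity))
  refine (Finset.expect_mul_sq_le_sq_mul_sq _ _ _).trans ?_
  simp only [sq_abs, expect_inner_signVec_sq]
  rw [mul_pow, Real.sq_sqrt (by positivity)]
  gcongr

end Rademacher

section TruncatedSquare

/-- The distance by which `t` exceeds the interval `[-M, M]`. -/
def excess (M : ℝ≥0) (t : ℝ) : ℝ := max (|t| - M) 0

/-- The Huber function: it agrees with the square on `[-M, M]` and grows linearly, with slope
`2 * M`, outside of that interval. -/
def huber (M : ℝ≥0) (t : ℝ) : ℝ := t ^ 2 - excess M t ^ 2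

variable {M : ℝ≥0}

lemma excess_nonneg (M : ℝ≥0) (t : ℝ) : 0 ≤ excess M t := le_max_right _ _

@[simp] lemma excess_zero (M : ℝ≥0) : excess M 0 = 0 := by simp [excess]

@[simp] lemma huber_zero (M : ℝ≥0) : huber M 0 = 0 := by simp [huber]

lemma abs_excess_sub_excess_le (M : ℝ≥0) (s t : ℝ) : |excess M s - excess M t| ≤ |s - t| :=
  calc |excess M s - excess M t| ≤ |(|s| - M) - (|t| - M)| := abs_max_sub_max_le_abs _ _ _
    _ = |(|s| - |t|)| := by rw [sub_sub_sub_cancel_right]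
    _ ≤ |s - t| := abs_abs_sub_abs_le_abs_sub s t

lemma four_mul_excess_le_sq (M : ℝ≥0) (t : ℝ) : 4 * (M * excess M t) ≤ t ^ 2 := by
  rw [excess, ← sq_abs t]
  rcases max_choice (|t| - M) 0 with h | h <;> rw [h]
  · linarith [sq_nonneg (|t| - 2 * M)]
  · simpa using sq_nonneg |t|

lemma abs_excess_sq_sub_excess_sq_le (hM : 0 < M) (s t : ℝ) :
    |excess M s ^ 2 - excess M t ^ 2| ≤ (4 * M : ℝ)⁻¹ * (|s - t| * (s ^ 2 + t ^ 2)) := by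
  have hsum : excess M s + excess M t ≤ (4 * M : ℝ)⁻¹ * (s ^ 2 + t ^ 2) := by
    rw [le_inv_mul_iff₀ (by positivity)]
    linarith [four_mul_excess_le_sq M s, four_mul_excess_le_sq M t]
  calc |excess M s ^ 2 - excess M t ^ 2|
      = (excess M s + excess M t) * |excess M s - excess M t| := by
        rw [sq_sub_sq, abs_mul, abs_of_nonneg (add_nonneg (excess_nonneg M s) (excess_nonneg M t))]
    _ ≤ (4 * M : ℝ)⁻¹ * (s ^ 2 + t ^ 2) * |s - t| := by
        exact mul_le_mul hsum (abs_excess_sub_excess_le M s t) (abs_nonneg _) (by positivity)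
    _ = _ := by ring

/-- With `huber_eq_tangent`, this presents `huber M t` as the supremum over `c ∈ [0, M]` of the
functions `2 * c * |t| - c ^ 2`, all of them `2 * M`-Lipschitz in `t`. -/
lemma tangent_le_huber {c : ℝ} (hcM : c ≤ M) (t : ℝ) :
    2 * c * |t| - c ^ 2 ≤ huber M t := by
  have h : excess M t ≤ |(|t| - c)| :=
    max_le ((sub_le_sub_left hcM _).trans (le_abs_self _)) (abs_nonneg _)
  have h' := pow_le_pow_left₀ (excess_nonneg M t) h 2
  rw [sq_abs] at h'
  rw [huber, ← sq_abs t]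
  linarith

lemma huber_eq_tangent (M : ℝ≥0) (t : ℝ) :
    huber M t = 2 * min |t| M * |t| - min |t| M ^ 2 := by
  rw [huber, excess, ← sq_abs t]
  rcases le_total |t| M with h | h
  · rw [min_eq_left h, max_eq_right (sub_nonpos.2 h)]
    ring
  · rw [min_eq_right h, max_eq_left (sub_nonneg.2 h)]
    ring

lemma lipschitzWith_huber (M : ℝ≥0) : LipschitzWith (2 * M) (huber M) := by
  refine LipschitzWith.of_le_add_mul _ fun s t => ?_
  have hst : 2 * min |s| M * (|s| - |t|) ≤ 2 * M * |s - t| :=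
    calc 2 * min |s| M * (|s| - |t|) ≤ 2 * min |s| M * |s - t| := by
          gcongr
          exact abs_sub_abs_le_abs_sub s t
      _ ≤ 2 * M * |s - t| := by
          gcongr
          exact min_le_right _ _
  have ht := tangent_le_huber (min_le_right |s| M) t
  rw [huber_eq_tangent M s, Real.dist_eq]
  push_cast
  linarith

end TruncatedSquare

section Euclidean

variable {ι : Type*} [Fintype ι]

/-- The test functions: truncated squares of Rademacher sums, as functions of the coefficients. -/
def huberSign (M : ℝ≥0) (ε : ι → ℤˣ) (x : UBall (EuclideanSpace ℝ ι)) : ℝ :=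
  huber M ⟪signVec ε, (x : EuclideanSpace ℝ ι)⟫

/-- The part of `2 * x i * x j = 𝔼 ε, ε i * ε j * ⟪signVec ε, x⟫ ^ 2` lost by truncating the
square. -/
def truncError [DecidableEq ι] (M : ℝ≥0) (i j : ι) (x : UBall (EuclideanSpace ℝ ι)) : ℝ :=
  𝔼 ε, signVec ε i * (signVec ε j * excess M ⟪signVec ε, (x : EuclideanSpace ℝ ι)⟫ ^ 2)

lemma lipschitzWith_huberSign (M : ℝ≥0) (ε : ι → ℤˣ) :
    LipschitzWith (2 * M * NNReal.sqrt (Fintype.card ι)) (huberSign M ε) := by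
  have hnorm : ‖innerSL ℝ (signVec ε)‖₊ ≤ NNReal.sqrt (Fintype.card ι) := by
    rw [NNReal.le_sqrt_iff_sq_le, ← NNReal.coe_le_coe]
    simp [norm_signVec_sq]
  have hinner := (innerSL ℝ (signVec ε)).lipschitz.weaken hnorm
  have h := (lipschitzWith_huber M).comp
    (hinner.comp (LipschitzWith.subtype_val (UBall (EuclideanSpace ℝ ι))))
  rw [mul_one] at h
  exact h

lemma huberSign_mem_Lip0B (M : ℝ≥0) (ε : ι → ℤˣ) :
    huberSign M ε ∈ Lip0B (EuclideanSpace ℝ ι) :=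
  ⟨⟨_, lipschitzWith_huberSign M ε⟩, by simp [huberSign, zeroB]⟩

variable [DecidableEq ι]

lemma lipschitzWith_truncError {M : ℝ≥0} (hM : 0 < M) (i j : ι) :
    LipschitzWith M⁻¹ (truncError M i j) := by
  refine LipschitzWith.of_dist_le_mul fun x y => ?_
  obtain ⟨x, hx⟩ := x
  obtain ⟨y, hy⟩ := y
  have hx : ‖x‖ ≤ 1 := mem_closedBall_zero_iff.1 hx
  have hy : ‖y‖ ≤ 1 := mem_closedBall_zero_iff.1 hy
  have hsqrt : √(6 * (‖x‖ ^ 4 + ‖y‖ ^ 4)) ≤ 4 := by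
    rw [Real.sqrt_le_left zero_le_four]
    linarith [pow_le_one₀ (n := 4) (norm_nonneg x) hx, pow_le_one₀ (n := 4) (norm_nonneg y) hy]
  simp only [Subtype.dist_eq, dist_eq_norm, truncError]
  calc |(𝔼 ε, signVec ε i * (signVec ε j * excess M ⟪signVec ε, x⟫ ^ 2)) -
        𝔼 ε, signVec ε i * (signVec ε j * excess M ⟪signVec ε, y⟫ ^ 2)|
      ≤ 𝔼 ε, |excess M ⟪signVec ε, x⟫ ^ 2 - excess M ⟪signVec ε, y⟫ ^ 2| := by
        rw [← Finset.expect_sub_distrib]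
        refine (Finset.abs_expect_le _ _).trans_eq <| Finset.expect_congr rfl fun ε _ => ?_
        rw [← mul_sub, ← mul_sub, abs_mul, abs_mul, abs_signVec, abs_signVec, one_mul, one_mul]
    _ ≤ 𝔼 ε, (4 * M : ℝ)⁻¹ *
          (|⟪signVec ε, x - y⟫| * (⟪signVec ε, x⟫ ^ 2 + ⟪signVec ε, y⟫ ^ 2)) := by
        refine Finset.expect_le_expect fun ε _ => ?_
        rw [inner_sub_right]
        exact abs_excess_sq_sub_excess_sq_le hM _ _
    _ ≤ (4 * M : ℝ)⁻¹ * (‖x - y‖ * 4) := by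
        rw [← Finset.mul_expect]
        gcongr
        exact (expect_abs_inner_signVec_mul_le x y (x - y)).trans (by gcongr)
    _ = (M⁻¹ : ℝ≥0) * ‖x - y‖ := by
        push_cast
        field_simp

lemma truncError_mem_Lip0B {M : ℝ≥0} (hM : 0 < M) (i j : ι) :
    truncError M i j ∈ Lip0B (EuclideanSpace ℝ ι) :=
  ⟨⟨_, lipschitzWith_truncError hM i j⟩, by simp [truncError, zeroB]⟩

lemma expect_smul_huberSign (M : ℝ≥0) {i j : ι} (hij : i ≠ j) :
    𝔼 ε, (signVec ε i * signVec ε j) • huberSign M ε =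
      (2 : ℝ) • (fun x : UBall (EuclideanSpace ℝ ι) => x.1 i * x.1 j) - truncError M i j := by
  funext x
  simp only [Finset.expect_apply, Pi.smul_apply, Pi.sub_apply, smul_eq_mul, huberSign, huber,
    truncError, ← expect_signVec_mul_inner_sq hij, ← Finset.expect_sub_distrib, mul_sub, mul_assoc]

/-- Polarizing with these two points keeps the arguments in the unit ball. -/
lemma polar_eq_two_mul_sub {V : Type*} [AddCommGroup V] [Module ℝ V] (q : QuadraticForm ℝ V)
    (x y : V) : QuadraticMap.polar q x y =
      2 * (q ((1 / 2 : ℝ) • (x + y)) - q ((1 / 2 : ℝ) • (x - y))) := by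
  rw [q.map_smul, q.map_smul, sub_eq_add_neg x y, QuadraticMap.map_add q x y,
    QuadraticMap.map_add q x (-y), q.polar_neg_right, q.map_neg, smul_eq_mul, smul_eq_mul]
  ring

lemma sum_mul_polar_single (q : QuadraticForm ℝ (EuclideanSpace ℝ ι)) (x : EuclideanSpace ℝ ι) :
    ∑ i, ∑ j, x i * x j * QuadraticMap.polar q (EuclideanSpace.single i 1)
      (EuclideanSpace.single j 1) = 2 * q x := by
  have hx : ∑ i, x i • EuclideanSpace.single i (1 : ℝ) = x := by
    simpa using (EuclideanSpace.basisFun ι ℝ).sum_repr x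
  calc _ = QuadraticMap.polarBilin q x x := by
        conv_rhs => rw [← hx]
        rw [Finset.sum_comm]
        simp [Finset.mul_sum, mul_assoc, mul_left_comm, LinearMap.sum_apply]
    _ = 2 * q x := by simp

/-- The averaged matrix has entries at least `1` off the diagonal, while its sum is the average of
`2 * q ε (signVec ε)`, which is at most `2 * A * card ι`. -/
lemma card_le_of_one_le_expect_mul_polar [Nonempty ι]
    {q : (ι → ℤˣ) → QuadraticForm ℝ (EuclideanSpace ℝ ι)} {A : ℝ}
    (hA : ∀ ε x, |q ε x| ≤ A * ‖x‖ ^ 2)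
    (hpolar : ∀ i j, i ≠ j → 1 ≤ 𝔼 ε, signVec ε i * signVec ε j *
      QuadraticMap.polar (q ε) (EuclideanSpace.single i 1) (EuclideanSpace.single j 1)) :
    (Fintype.card ι : ℝ) ≤ 1 + 4 * A := by
  set a : ι → ι → ℝ := fun i j => 𝔼 ε, signVec ε i * signVec ε j *
    QuadraticMap.polar (q ε) (EuclideanSpace.single i 1) (EuclideanSpace.single j 1) with ha
  have hdiag (i : ι) : -(2 * A) ≤ a i i := by
    refine Finset.le_expect Finset.univ_nonempty fun ε _ => ?_
    have h := neg_le_of_abs_le (hA ε (EuclideanSpace.single i 1))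
    rw [PiLp.norm_single, norm_one, one_pow, mul_one] at h
    rw [signVec_mul_self, one_mul, QuadraticMap.polar_self, two_nsmul]
    linarith
  have hlower : Fintype.card ι * (Fintype.card ι - (1 + 2 * A)) ≤ ∑ i, ∑ j, a i j :=
    calc Fintype.card ι * (Fintype.card ι - (1 + 2 * A))
        = ∑ i : ι, ∑ j : ι, (1 - if i = j then 1 + 2 * A else 0) := by
          simp only [Finset.sum_sub_distrib, Finset.sum_const, Finset.sum_ite_eq, Finset.mem_univ,
            if_true, Finset.card_univ, nsmul_eq_mul, mul_one, mul_sub]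
      _ ≤ ∑ i, ∑ j, a i j := by
          gcongr with i _ j _
          split_ifs with hij
          · subst hij
            linarith [hdiag i]
          · simpa using hpolar i j hij
  have hupper : ∑ i, ∑ j, a i j ≤ Fintype.card ι * (2 * A) := by
    simp only [ha, ← Finset.expect_sum_comm, sum_mul_polar_single]
    refine Finset.expect_le Finset.univ_nonempty fun ε _ => ?_
    have h := le_of_abs_le (hA ε (signVec ε))
    rw [norm_signVec_sq] at h
    linarith
  have h := le_of_mul_le_mul_left (hlower.trans hupper) (mod_cast Fintype.card_pos)
  linarith

namespace IsPolynomialProjection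

variable {Q : (UBall (EuclideanSpace ℝ ι) → ℝ) →ₗ[ℝ] (UBall (EuclideanSpace ℝ ι) → ℝ)} {K M : ℝ≥0}

lemma expect_mul_map_huberSign (hQ : IsPolynomialProjection 2 Q K) {i j : ι} (hij : i ≠ j)
    (x : UBall (EuclideanSpace ℝ ι)) :
    𝔼 ε, signVec ε i * signVec ε j * Q (huberSign M ε) x =
      2 * (x.1 i * x.1 j) - Q (truncError M i j) x := by
  have hmul : Q (fun x => x.1 i * x.1 j) = fun x => x.1 i * x.1 j :=
    hQ.map_eq_self _ <| mul_mem_PhomB_two (EuclideanSpace.proj i) (EuclideanSpace.proj j)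
  have hexpect (a : (ι → ℤˣ) → ℝ) :
      Q (𝔼 ε, a ε • huberSign M ε) = 𝔼 ε, a ε • Q (huberSign M ε) := by
    simpa only [LinearMap.coe_restrictScalars, map_smul] using
      map_expect (Q.restrictScalars ℚ≥0) (fun ε => a ε • huberSign M ε) Finset.univ
  have h := congrFun (congrArg Q (expect_smul_huberSign M hij)) x
  rw [map_sub, map_smul, hmul, hexpect] at h
  simpa only [Finset.expect_apply, Pi.smul_apply, Pi.sub_apply, smul_eq_mul] using h

lemma two_sub_le_expect_mul_polar (hQ : IsPolynomialProjection 2 Q K) (hM : 0 < M)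
    {q : (ι → ℤˣ) → QuadraticForm ℝ (EuclideanSpace ℝ ι)}
    (hq : ∀ ε x, Q (huberSign M ε) x = q ε x) {i j : ι} (hij : i ≠ j) :
    2 - 2 * (K / M : ℝ) ≤ 𝔼 ε, signVec ε i * signVec ε j *
      QuadraticMap.polar (q ε) (EuclideanSpace.single i 1) (EuclideanSpace.single j 1) := by
  set e : ι → EuclideanSpace ℝ ι := fun i => EuclideanSpace.single i 1
  have hmem {z : EuclideanSpace ℝ ι} (hz : ‖z‖ ≤ ‖e i‖ + ‖e j‖) :
      (1 / 2 : ℝ) • z ∈ UBall (EuclideanSpace ℝ ι) := by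
    simp only [e, PiLp.norm_single, norm_one] at hz
    rw [UBall, mem_closedBall_zero_iff, norm_smul, norm_div, norm_one, Real.norm_two]
    linarith
  let u : UBall (EuclideanSpace ℝ ι) := ⟨_, hmem (norm_add_le (e i) (e j))⟩
  let v : UBall (EuclideanSpace ℝ ι) := ⟨_, hmem (norm_sub_le (e i) (e j))⟩
  have hu : u.1 i * u.1 j = 1 / 4 := by
    simp only [u, e, PiLp.smul_apply, PiLp.add_apply, PiLp.single_eq_same,
      PiLp.single_eq_of_ne 2 hij, PiLp.single_eq_of_ne 2 hij.symm, smul_eq_mul]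
    norm_num
  have hv : v.1 i * v.1 j = -(1 / 4) := by
    simp only [v, e, PiLp.smul_apply, PiLp.sub_apply, PiLp.single_eq_same,
      PiLp.single_eq_of_ne 2 hij, PiLp.single_eq_of_ne 2 hij.symm, smul_eq_mul]
    norm_num
  have huv : dist u v = 1 := by
    have : u.1 - v.1 = e j := by simp only [u, v]; module
    rw [Subtype.dist_eq, dist_eq_norm, this, PiLp.norm_single, norm_one]
  have herror : Q (truncError M i j) u - Q (truncError M i j) v ≤ K / M := by
    have h := (hQ.lipschitzWith _ (truncError_mem_Lip0B hM i j) _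
      (lipschitzWith_truncError hM i j)).dist_le_mul u v
    rw [huv, Real.dist_eq] at h
    exact (le_abs_self _).trans (by simpa [div_eq_mul_inv] using h)
  have hpolar : 𝔼 ε, signVec ε i * signVec ε j * QuadraticMap.polar (q ε) (e i) (e j) =
      2 * (𝔼 ε, signVec ε i * signVec ε j * Q (huberSign M ε) u -
        𝔼 ε, signVec ε i * signVec ε j * Q (huberSign M ε) v) := by
    rw [← Finset.expect_sub_distrib, Finset.mul_expect]
    refine Finset.expect_congr rfl fun ε _ => ?_
    rw [polar_eq_two_mul_sub, hq, hq]
    ring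
  rw [hpolar, hQ.expect_mul_map_huberSign hij, hQ.expect_mul_map_huberSign hij, hu, hv]
  linarith

end IsPolynomialProjection

end Euclidean

lemma IsPolynomialProjection.card_le {ι : Type*} [Fintype ι] [Nonempty ι] {K M : ℝ≥0}
    {Q : (UBall (EuclideanSpace ℝ ι) → ℝ) →ₗ[ℝ] (UBall (EuclideanSpace ℝ ι) → ℝ)}
    (hQ : IsPolynomialProjection 2 Q K) (hM : 0 < M) (hKM : 2 * K ≤ M) :
    (Fintype.card ι : ℝ) ≤ 1 + 8 * (K * M * √(Fintype.card ι)) := by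
  classical
  choose q hq hq_le using fun ε : ι → ℤˣ =>
    hQ.exists_quadraticForm (huberSign_mem_Lip0B M ε) (lipschitzWith_huberSign M ε)
  have hKM' : (K / M : ℝ) ≤ 1 / 2 := by
    rw [div_le_div_iff₀ (mod_cast hM) two_pos]
    exact_mod_cast (by linarith : K * 2 ≤ 1 * M)
  have h := card_le_of_one_le_expect_mul_polar hq_le fun i j hij => by
    linarith [hQ.two_sub_le_expect_mul_polar hM hq hij]
  push_cast at h
  linarith

section UniformlyComplemented

variable {X : Type*} [NormedAddCommGroup X] [NormedSpace ℝ X]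

/-- `X` contains uniformly complemented `(ℓ₂ⁿ)ₙ`: for some constant `C`, each `ℓ₂ⁿ` is
`C`-isomorphic to a subspace of `X` that is the range of a projection of norm at most `C`. The
isomorphism is normalized to be expanding. -/
def ContainsUniformlyComplementedEuclidean (X : Type*) [NormedAddCommGroup X] [NormedSpace ℝ X] :
    Prop :=
  ∃ C : ℝ, ∀ n : ℕ, ∃ F : Submodule ℝ X,
    (∃ T : EuclideanSpace ℝ (Fin n) ≃ₗ[ℝ] F,
      ∀ v : EuclideanSpace ℝ (Fin n), ‖v‖ ≤ ‖(T v : X)‖ ∧ ‖(T v : X)‖ ≤ C * ‖v‖) ∧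
    (∃ P : X →L[ℝ] X, (∀ x : X, P x ∈ F) ∧ (∀ y ∈ F, P y = y) ∧ ‖P‖ ≤ C)

lemma exists_contractions_of_complemented {E : Type*} [NormedAddCommGroup E] [NormedSpace ℝ E]
    {F : Submodule ℝ X} {C D : ℝ≥0} (T : E ≃ₗ[ℝ] F)
    (hT : ∀ v, ‖v‖ ≤ ‖(T v : X)‖ ∧ ‖(T v : X)‖ ≤ C * ‖v‖) (P : X →L[ℝ] X)
    (hPF : ∀ x, P x ∈ F) (hP : ∀ y ∈ F, P y = y) (hPD : ‖P‖ ≤ D) :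
    ∃ (τ : X →L[ℝ] E) (J : E →L[ℝ] X),
      ‖τ‖ ≤ 1 ∧ ‖J‖ ≤ 1 ∧ ∀ v, τ (J v) = (C * D)⁻¹ • v := by
  let τ : X →ₗ[ℝ] E := T.symm.toLinearMap ∘ₗ P.toLinearMap.codRestrict F hPF
  let J : E →ₗ[ℝ] X := F.subtype ∘ₗ T.toLinearMap
  have hτ (x : X) : ‖τ x‖ ≤ D * ‖x‖ :=
    calc ‖τ x‖ ≤ ‖(T (τ x) : X)‖ := (hT _).1
      _ = ‖P x‖ := by simp [τ]
      _ ≤ D * ‖x‖ := P.le_of_opNorm_le hPD x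
  have hτJ (v : E) : τ (J v) = v := T.symm_apply_eq.2 <| Subtype.ext <| hP _ (T v).2
  have hJ (v : E) : ‖J v‖ ≤ C * ‖v‖ := (hT v).2
  refine ⟨(D : ℝ)⁻¹ • τ.mkContinuous D hτ, (C : ℝ)⁻¹ • J.mkContinuous C hJ, ?_, ?_, fun v => ?_⟩
  · rw [norm_smul, norm_inv, NNReal.norm_eq]
    exact inv_mul_le_one_of_le₀ (τ.mkContinuous_norm_le D.2 _) D.2
  · rw [norm_smul, norm_inv, NNReal.norm_eq]
    exact inv_mul_le_one_of_le₀ (J.mkContinuous_norm_le C.2 _) C.2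
  · simp [hτJ, smul_smul, mul_comm, NNReal.smul_def]

theorem statement2_general (hX : ContainsUniformlyComplementedEuclidean X) :
    ¬ ∃ Q K, IsPolynomialProjection (X := X) 2 Q K := by
  rintro ⟨Q, K, hQ⟩
  obtain ⟨C₀, hC₀⟩ := hX
  set C : ℝ≥0 := C₀.toNNReal + 1
  have hC₀C : C₀ ≤ C := (Real.le_coe_toNNReal C₀).trans (by simp [C])
  set K' : ℝ≥0 := ((C * C)⁻¹ ^ 2)⁻¹ * K
  have hQ' (n : ℕ) : ∃ Q', IsPolynomialProjection (X := EuclideanSpace ℝ (Fin n)) 2 Q' K' := by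
    obtain ⟨F, ⟨T, hT⟩, P, hPF, hP, hPC⟩ := hC₀ n
    obtain ⟨τ, J, hτ, hJ, hτJ⟩ := exists_contractions_of_complemented T
      (fun v => ⟨(hT v).1, (hT v).2.trans (by gcongr)⟩) P hPF hP (hPC.trans hC₀C)
    exact hQ.exists_of_comp_eq_smul hτ hJ (by positivity) hτJ
  set M : ℝ≥0 := 2 * K' + 1
  obtain ⟨m, hm⟩ := exists_nat_gt (1 + 8 * (K' * M) : ℝ)
  have hm₁ : (1 : ℝ) < m := hm.trans_le' (le_add_of_nonneg_right (by positivity))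
  have hm₀ : 0 < m := by exact_mod_cast zero_lt_one.trans hm₁
  obtain ⟨Q', hQ'⟩ := hQ' (m ^ 2)
  have : Nonempty (Fin (m ^ 2)) := Fin.pos_iff_nonempty.1 (by positivity)
  have hcard := hQ'.card_le (M := M) (by positivity) (by simp [M])
  rw [Fintype.card_fin, Nat.cast_pow, Real.sqrt_sq m.cast_nonneg] at hcard
  refine hcard.not_gt ?_
  calc 1 + 8 * (K' * M * m : ℝ) ≤ (1 + 8 * (K' * M)) * m := by linarith
    _ < m * m := by gcongr
    _ = (m : ℝ) ^ 2 := (sq _).symm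

end UniformlyComplemented

/-- **Theorem B, first clause.** If an infinite-dimensional Banach space `X` contains
uniformly complemented `ℓ₂ⁿ`'s, then `P(²X)` is not complemented in `Lip₀(B_X)`:
there is no Lipschitz-norm-bounded linear projection from `Lip₀(B_X)` onto the image
of `P(²X)` under the restriction embedding. -/
theorem statement2 (X : Type*) [NormedAddCommGroup X] [NormedSpace ℝ X] [CompleteSpace X]
    (hinf : ¬ FiniteDimensional ℝ X)
    (C : ℝ) (hC : 1 ≤ C)
    (hunif : ∀ n : ℕ, ∃ F : Submodule ℝ X,
      (∃ T : EuclideanSpace ℝ (Fin n) ≃ₗ[ℝ] F,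
        ∀ v : EuclideanSpace ℝ (Fin n), ‖v‖ ≤ ‖(T v : X)‖ ∧ ‖(T v : X)‖ ≤ C * ‖v‖) ∧
      (∃ P : X →L[ℝ] X, (∀ x : X, P x ∈ F) ∧ (∀ y ∈ F, P y = y) ∧ ‖P‖ ≤ C)) :
    ¬ ∃ (Q : (↥(UBall X) → ℝ) →ₗ[ℝ] (↥(UBall X) → ℝ)) (K : NNReal),
      (∀ f ∈ Lip0B X, Q f ∈ PhomB 2 X) ∧ (∀ f ∈ PhomB 2 X, Q f = f) ∧
      (∀ f ∈ Lip0B X, ∀ L : NNReal, LipschitzWith L f → LipschitzWith (K * L) (Q f)) :=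
  fun ⟨Q, K, hmem, hself, hlip⟩ => statement2_general ⟨C, hunif⟩ ⟨Q, K, hmem, hself, hlip⟩
end
end
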